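/- Let λ > 1, let α be Diophantine, and let θ ∈ ℝ satisfy δ(α,θ) < ln λ. Let {φ_s}_{s≥1} be an orthonormal basis of ℓ²(ℤ) consisting of eigenfunctions of the almost Mathieu operator H_{λ,α,θ}, and for each s let m_s ∈ ℤ be a global maximum of |φ_s|. Then d_+ := limsup_{L→∞} #{s : |m_s| ≤ L}/(2L+1) ≤ 1 + δ(α,θ)/(2 ln λ). -/

import Mathlib

noncomputable section

open Filter Real

def distToInt (x : ℝ) : ℝ := |x - round x|

def IsDiophantine (α : ℝ) : Prop :=
  ∃ κ τ : ℝ, 0 < κ ∧ 0 < τ ∧ ∀ k : ℤ, k ≠ 0 → τ / |(k : ℝ)| ^ κ ≤ distToInt (k * α)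

def deltaPhase (α θ : ℝ) : ℝ :=
  limsup (fun n : ℤ => -Real.log (distToInt (2 * θ + n * α)) / |(n : ℝ)|) cofinite

def amoPot (lam α θ : ℝ) : ℤ → ℝ := fun n => 2 * lam * Real.cos (2 * Real.pi * (θ + n * α))

def IsEigenfunction (g : ℤ → ℝ) (E : ℝ) (φ : ℤ → ℝ) : Prop :=
  ∀ n : ℤ, φ (n + 1) + φ (n - 1) + g n * φ n = E * φ n

def deltaPot (g : ℤ → ℝ) : ℝ :=
  limsup (fun n : ℤ => -Real.log (⨆ m : ℤ, |g (n - m) - g m|) / |(n : ℝ)|) cofinite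

def matNorm (M : Matrix (Fin 2) (Fin 2) ℝ) : ℝ := ⨆ p : Fin 2 × Fin 2, |M p.1 p.2|

def transfer (g : ℤ → ℝ) (E : ℝ) : ℕ → ℤ → Matrix (Fin 2) (Fin 2) ℝ
  | 0, _ => 1
  | n + 1, k => !![E - g (k + n), -1; 1, 0] * transfer g E n k

def LyapSup (g : ℤ → ℝ) (E : ℝ) : ℝ :=
  limsup (fun n : ℕ => ⨆ k : ℤ, Real.log (matNorm (transfer g E n k)) / n) atTop

def HasSULE (g : ℤ → ℝ) : Prop :=
  ∃ (Φ : HilbertBasis ℕ ℝ (lp (fun _ : ℤ => ℝ) 2)) (ns : ℕ → ℤ) (γ : ℝ),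
    0 < γ ∧
    (∀ s : ℕ, ∃ E : ℝ, IsEigenfunction g E (fun n => Φ s n)) ∧
    ∀ ε : ℝ, 0 < ε → ∃ C : ℝ,
      ∀ (s : ℕ) (n : ℤ),
        |Φ s n| ≤ C * Real.exp (ε * |(ns s : ℝ)|) * Real.exp (-γ * |(n : ℝ) - (ns s : ℝ)|)

set_option linter.unusedVariables false

def sn (x : ℝ) : ℝ := |2 * Real.sin (Real.pi * x)|
def ez (x : ℝ) : ℂ := Complex.exp ((2 * Real.pi * x : ℝ) * Complex.I)

lemma ez_norm (x : ℝ) : ‖ez x‖ = 1 := Complex.norm_exp_ofReal_mul_I _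
lemma ez_add (x y : ℝ) : ez (x + y) = ez x * ez y := by
  unfold ez; rw [← Complex.exp_add]; congr 1; push_cast; ring
lemma ez_pow (x : ℝ) (n : ℕ) : ez x ^ n = ez (n * x) := by
  unfold ez; rw [← Complex.exp_nat_mul]; congr 1; push_cast; ring
lemma sn_nonneg (x : ℝ) : 0 ≤ sn x := abs_nonneg _
lemma sn_le_two (x : ℝ) : sn x ≤ 2 := by
  unfold sn; rw [abs_mul, abs_two]; have := Real.abs_sin_le_one (π * x); linarith
lemma sn_neg (x : ℝ) : sn (-x) = sn x := by
  unfold sn; rw [mul_neg, Real.sin_neg, mul_neg, abs_neg]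
lemma sn_zero : sn 0 = 0 := by simp [sn]
lemma sn_add_le (x y : ℝ) : sn (x + y) ≤ sn x + sn y := by
  unfold sn
  rw [mul_add, Real.sin_add]
  have h1 := Real.abs_cos_le_one (π * x)
  have h2 := Real.abs_cos_le_one (π * y)
  rw [abs_mul, abs_mul, abs_mul, abs_two]
  have := abs_add_le (sin (π * x) * cos (π * y)) (cos (π * x) * sin (π * y))
  rw [abs_mul, abs_mul] at this
  nlinarith [abs_nonneg (sin (π * x)), abs_nonneg (sin (π * y))]
lemma sn_sub_le (x y : ℝ) : sn (x - y) ≤ sn x + sn y := by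
  rw [sub_eq_add_neg]; have := sn_add_le x (-y); rwa [sn_neg] at this
lemma sn_add_int (x : ℝ) (n : ℤ) : sn (x + n) = sn x := by
  unfold sn
  rw [mul_add, mul_comm π (n:ℝ), Real.sin_add_int_mul_pi, abs_mul, abs_mul, abs_mul]
  simp
lemma sn_eq_norm (x : ℝ) : sn x = ‖1 - ez x‖ := by
  unfold sn ez
  rw [norm_sub_rev, mul_comm _ Complex.I, Complex.norm_exp_I_mul_ofReal_sub_one]
  rw [show 2 * π * x / 2 = π * x by ring]; rfl
lemma sn_round (x : ℝ) : sn x = sn (x - round x) := by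
  have := sn_add_int (x - round x) (round x)
  simpa using this
lemma four_dist_le_sn (x : ℝ) : 4 * distToInt x ≤ sn x := by
  rw [sn_round]; unfold distToInt sn
  set u := x - round x
  have hu : |u| ≤ 1/2 := abs_sub_round x
  have h := Real.mul_le_sin (x := π * |u|) (by positivity) (by nlinarith [Real.pi_pos])
  have h3 : 2 / π * (π * |u|) = 2 * |u| := by field_simp
  rw [abs_mul, abs_two]
  have h4 : sin (π * |u|) ≤ |sin (π * u)| := by
    rcases abs_cases u with ⟨h, _⟩ | ⟨h, _⟩ <;> rw [h]
    · exact le_abs_self _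
    · rw [mul_neg, Real.sin_neg]; exact neg_le_abs _
  linarith
lemma sn_le_dist (x : ℝ) : sn x ≤ 2 * π * distToInt x := by
  rw [sn_round]; unfold distToInt sn
  set u := x - round x
  rw [abs_mul, abs_two]
  have : |sin (π * u)| ≤ |π * u| := Real.abs_sin_le_abs
  rw [abs_mul, abs_of_pos Real.pi_pos] at this
  linarith

/-- Diophantine condition in convenient form. -/
def Dio (α σ : ℝ) (κ : ℕ) : Prop := 0 < σ ∧ σ ≤ 1 ∧ ∀ k : ℤ, k ≠ 0 → σ / |(k : ℝ)| ^ κ ≤ sn (k * α)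

lemma exists_dio {α : ℝ} (h : IsDiophantine α) : ∃ σ κ, Dio α σ κ := by
  obtain ⟨κ, τ, hκ, hτ, h⟩ := h
  refine ⟨min τ 1, ⌈κ⌉₊, lt_min hτ one_pos, min_le_right _ _, fun k hk => ?_⟩
  have h1 : (1:ℝ) ≤ |(k:ℝ)| := by
    have := Int.one_le_abs hk
    exact_mod_cast this
  have h2 : |(k:ℝ)| ^ κ ≤ |(k:ℝ)| ^ ⌈κ⌉₊ := by
    rw [← Real.rpow_natCast]
    exact Real.rpow_le_rpow_of_exponent_le h1 (Nat.le_ceil κ)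
  have h3 : 0 < |(k:ℝ)| ^ κ := Real.rpow_pos_of_pos (by linarith) _
  calc min τ 1 / |(k : ℝ)| ^ ⌈κ⌉₊ ≤ τ / |(k:ℝ)| ^ κ := by
        gcongr
        exact min_le_left _ _
    _ ≤ distToInt (k * α) := h k hk
    _ ≤ 4 * distToInt (k * α) := by
        have : 0 ≤ distToInt (k * α) := abs_nonneg _
        linarith
    _ ≤ _ := four_dist_le_sn _

lemma Dio.ne {α σ : ℝ} {κ : ℕ} (h : Dio α σ κ) (k : ℤ) (hk : k ≠ 0) : 0 < sn (k * α) := by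
  refine lt_of_lt_of_le ?_ (h.2.2 k hk)
  have : (k:ℝ) ≠ 0 := by exact_mod_cast hk
  have := h.1
  positivity

lemma one_sub_r_pos {r : ℝ} (hr0 : 0 < r) (hr1 : r < 1) (x : ℝ) : 1 - r ≤ ‖1 - r * ez x‖ := by
  have := norm_sub_norm_le (1:ℂ) (r * ez x)
  rw [norm_mul, ez_norm, norm_one, Complex.norm_real, Real.norm_of_nonneg hr0.le] at this
  linarith

lemma one_sub_r_le {r : ℝ} (hr0 : 0 < r) (hr1 : r < 1) (x : ℝ) : ‖1 - r * ez x‖ ≤ 2 := by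
  have := norm_sub_le (1:ℂ) (r * ez x)
  rw [norm_mul, ez_norm, norm_one, Complex.norm_real, Real.norm_of_nonneg hr0.le] at this
  linarith

lemma log_series {r : ℝ} (hr0 : 0 < r) (hr1 : r < 1) (x : ℝ) :
    HasSum (fun m : ℕ => -((r * ez x) ^ m / m).re) (Real.log ‖1 - r * ez x‖) := by
  have h := Complex.hasSum_taylorSeries_neg_log (z := r * ez x) (by
    rw [norm_mul, ez_norm, Complex.norm_real, Real.norm_of_nonneg hr0.le]; linarith)
  have h2 := (Complex.hasSum_re h).neg
  simpa [Complex.log_re] using h2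

lemma T1 {α σ : ℝ} {κ : ℕ} (hD : Dio α σ κ) {r : ℝ} (hr0 : 0 < r) (hr1 : r < 1) :
    ∃ C : ℝ, 0 ≤ C ∧ ∀ (t : ℝ) (N : ℕ),
      |∑ j ∈ Finset.range N, Real.log ‖1 - r * ez (t + j * α)‖| ≤ C := by
  have hrn : ‖r‖ < 1 := by rw [Real.norm_of_nonneg hr0.le]; exact hr1
  have hs0 : Summable (fun m : ℕ => ((m:ℝ) ^ κ * r ^ m)) :=
    summable_pow_mul_geometric_of_norm_lt_one κ hrn
  have hs : Summable (fun m : ℕ => (2 / σ) * ((m:ℝ) ^ κ * r ^ m)) := hs0.mul_left _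
  refine ⟨∑' m : ℕ, (2 / σ) * ((m:ℝ) ^ κ * r ^ m), tsum_nonneg (fun m => by have := hD.1; positivity), ?_⟩
  intro t N
  have h := hasSum_sum (s := Finset.range N) (fun j _ => log_series hr0 hr1 (t + j * α))
  rw [← h.tsum_eq, ← Real.norm_eq_abs]
  refine tsum_of_norm_bounded hs.hasSum (fun m => ?_)
  rcases Nat.eq_zero_or_pos m with rfl | hm
  · simp only [CharP.cast_eq_zero, div_zero, Complex.zero_re, neg_zero, Finset.sum_const_zero, norm_zero]
    have := hD.1
    positivity
  have e1 : ∑ j ∈ Finset.range N, -((r * ez (t + j * α)) ^ m / m).re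
      = -((r ^ m * ez (m * t) / m) * ∑ j ∈ Finset.range N, (ez (m * α)) ^ j).re := by
    rw [Finset.mul_sum, Complex.re_sum, Finset.sum_neg_distrib]
    congr 1
    refine Finset.sum_congr rfl fun j _ => ?_
    congr 1
    rw [mul_pow, ez_pow, ez_pow, mul_add, ez_add, show (m:ℝ) * (j * α) = j * (m * α) by ring]
    ring
  rw [e1, norm_neg]
  have hne : 0 < sn (m * α) := by
    have := hD.ne (m:ℤ) (by exact_mod_cast hm.ne')
    simpa using this
  have hlow : σ / (m:ℝ) ^ κ ≤ sn (m * α) := by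
    have := hD.2.2 (m:ℤ) (by exact_mod_cast hm.ne')
    simpa using this
  have hg : ‖∑ j ∈ Finset.range N, (ez (m * α)) ^ j‖ * sn (m * α) ≤ 2 := by
    rw [sn_eq_norm, norm_sub_rev, mul_comm, ← norm_mul, mul_geom_sum]
    refine (norm_sub_le _ _).trans ?_
    rw [norm_pow, ez_norm]; norm_num
  have hg2 : ‖∑ j ∈ Finset.range N, (ez (m * α)) ^ j‖ ≤ 2 / σ * (m:ℝ)^κ := by
    have hmp : (0:ℝ) < (m:ℝ)^κ := by positivity
    have hσ := hD.1
    have : ‖∑ j ∈ Finset.range N, (ez (m * α)) ^ j‖ * (σ / (m:ℝ)^κ) ≤ 2 :=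
      le_trans (mul_le_mul_of_nonneg_left hlow (norm_nonneg _)) hg
    have h3 : ‖∑ j ∈ Finset.range N, (ez (m * α)) ^ j‖ =
      ‖∑ j ∈ Finset.range N, (ez (m * α)) ^ j‖ * (σ / (m:ℝ)^κ) * ((m:ℝ)^κ/σ) := by field_simp
    rw [h3]
    calc _ ≤ 2 * ((m:ℝ)^κ/σ) := by gcongr
      _ = _ := by ring
  refine (Complex.abs_re_le_norm _).trans ?_
  rw [norm_mul, norm_div, norm_mul, ez_norm, norm_pow, Complex.norm_real, Real.norm_of_nonneg hr0.le,
    Complex.norm_natCast, mul_one]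
  have hm1 : (1:ℝ) ≤ m := by exact_mod_cast hm
  have : r ^ m / m ≤ r ^ m := div_le_self (by positivity) hm1
  calc _ ≤ r ^ m * (2 / σ * (m:ℝ)^κ) := by gcongr
    _ = _ := by ring

lemma sn_le_r {r : ℝ} (hr0 : 0 < r) (hr1 : r < 1) (x : ℝ) :
    sn x ≤ 2 / (1 + r) * ‖1 - r * ez x‖ := by
  rw [sn_eq_norm]
  have hz := ez_norm x
  set z := ez x
  have hz2 : z.re ^ 2 + z.im ^ 2 = 1 := by
    have := Complex.sq_norm z
    rw [hz, Complex.normSq_apply] at this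
    nlinarith
  rw [div_mul_eq_mul_div, le_div_iff₀ (by linarith)]
  rw [← sq_le_sq₀ (by positivity) (by positivity)]
  rw [mul_pow, mul_pow, Complex.sq_norm, Complex.sq_norm, Complex.normSq_apply, Complex.normSq_apply]
  simp
  have : -1 ≤ z.re := by nlinarith [sq_nonneg z.im]
  nlinarith [mul_nonneg (sq_nonneg (1 - r)) (by linarith : 0 ≤ 1 + z.re)]

lemma r_le_sn {r : ℝ} (hr0 : 0 < r) (hr1 : r < 1) (x : ℝ) :
    ‖1 - r * ez x‖ ≤ sn x + (1 - r) := by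
  rw [sn_eq_norm]
  have : (1:ℂ) - r * ez x = (1 - ez x) + ((1 - r : ℝ) : ℂ) * ez x := by push_cast; ring
  rw [this]
  refine (norm_add_le _ _).trans ?_
  rw [norm_mul, ez_norm, Complex.norm_real, Real.norm_of_nonneg (by linarith)]
  linarith

def blk (a : ℤ) (N : ℕ) : Finset ℤ := Finset.Ico a (a + N)

lemma mem_blk {a b : ℤ} {N : ℕ} : b ∈ blk a N ↔ a ≤ b ∧ b < a + N := by simp [blk]

lemma blk_card (a : ℤ) (N : ℕ) : (blk a N).card = N := by simp [blk]

lemma blk_sum (a : ℤ) (N : ℕ) (f : ℤ → ℝ) :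
    ∑ b ∈ blk a N, f b = ∑ j ∈ Finset.range N, f (a + j) := by
  symm
  refine Finset.sum_nbij (fun j => a + j) ?_ ?_ ?_ ?_
  · intro j hj; simp [mem_blk] at *; omega
  · intro i _ j _ h; simpa using h
  · intro b hb
    simp [mem_blk] at hb
    refine ⟨(b - a).toNat, ?_, ?_⟩
    · simp; omega
    · simp; omega
  · intros; rfl

def gcl (ρ : ℝ) (s : ℝ) : ℝ := if s < ρ then -Real.log s else 0

lemma gcl_nonneg {ρ s : ℝ} (hρ : ρ ≤ 1) (hs : 0 ≤ s) : 0 ≤ gcl ρ s := by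
  unfold gcl
  split_ifs with h
  · have := Real.log_nonpos hs (by linarith); linarith
  · exact le_rfl

lemma gcl_le {ρ s b : ℝ} (hb : 0 ≤ b) (hs : Real.exp (-b) ≤ s) : gcl ρ s ≤ b := by
  unfold gcl
  split_ifs with h
  · have := Real.log_le_log (Real.exp_pos _) hs
    rw [Real.log_exp] at this; linarith
  · exact hb

lemma sep {σ ε : ℝ} (hσ : 0 < σ) (hσ1 : σ ≤ 1) (κ : ℕ) (hε : 0 < ε) :
    ∃ ρ : ℝ, 0 < ρ ∧ ρ < 1 ∧ ∀ s : ℤ → ℝ, (∀ j, 0 ≤ s j) →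
      (∀ i j : ℤ, i ≠ j → σ / |((i - j : ℤ) : ℝ)| ^ κ ≤ s i + s j) →
      ∀ N : ℕ, 1 ≤ N → ∀ a : ℤ, ∃ j₀ ∈ blk a N, (∀ j ∈ blk a N, s j₀ ≤ s j) ∧
        ∑ j ∈ (blk a N).erase j₀, gcl ρ (s j) ≤ ε * N := by
  set c2 : ℝ := 2 * κ + Real.log (2 / σ) with hc2
  have hl : 0 ≤ Real.log (2 / σ) := Real.log_nonneg (by rw [le_div_iff₀ hσ]; linarith)
  have hc2n : 0 ≤ c2 := by positivity
  obtain ⟨N0, hN0⟩ : ∃ N0 : ℕ, (10 * c2 / ε) ^ 2 ≤ N0 ∧ 1 ≤ N0 := by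
    obtain ⟨n, hn⟩ := exists_nat_ge ((10 * c2 / ε) ^ 2)
    exact ⟨n + 1, by push_cast; linarith, by omega⟩
  set ρ : ℝ := σ / (2 * (2 * N0 : ℝ) ^ κ) / 2 with hρ
  have hN0r : (1:ℝ) ≤ N0 := by exact_mod_cast hN0.2
  have hpow1 : (1:ℝ) ≤ (2 * N0 : ℝ) ^ κ := one_le_pow₀ (by linarith)
  have hρ0 : 0 < ρ := by positivity
  have hρ1 : ρ < 1 := by
    have : σ / (2 * (2 * N0 : ℝ) ^ κ) ≤ 1 := by
      rw [div_le_one (by positivity)]; linarith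
    rw [hρ]; linarith
  refine ⟨ρ, hρ0, hρ1, ?_⟩
  intro s hs0 hsep
  -- lower bound for the larger of two
  have hlow : ∀ (N : ℕ) (i j : ℤ), i ≠ j → |i - j| ≤ N → s i ≤ s j → σ / (2 * (N:ℝ) ^ κ) ≤ s j := by
    intro N i j hij hN hle
    have h1 := hsep i j hij
    have h2 : (0:ℝ) < |((i - j : ℤ) : ℝ)| := by
      rw [abs_pos]; exact_mod_cast sub_ne_zero.mpr hij
    have h3 : |((i - j : ℤ) : ℝ)| ≤ N := by exact_mod_cast hN
    have h4 : σ / (N:ℝ) ^ κ ≤ σ / |((i - j : ℤ) : ℝ)| ^ κ := by gcongr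
    have h5 : σ / (2 * (N:ℝ) ^ κ) = σ / (N:ℝ) ^ κ / 2 := by rw [mul_comm, div_mul_eq_div_div]
    rw [h5]; linarith
  have key : ∀ N : ℕ, 1 ≤ N → ∀ a : ℤ, ∃ j₀ ∈ blk a N, (∀ j ∈ blk a N, s j₀ ≤ s j) ∧
      (N < 2 * N0 → ∑ j ∈ (blk a N).erase j₀, gcl ρ (s j) ≤ 0) ∧
      (N0 ≤ N → ∑ j ∈ (blk a N).erase j₀, gcl ρ (s j) ≤ ε * N - 10 * c2 * √N) := by
    intro N
    induction N using Nat.strong_induction_on with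
    | _ N ih =>
    intro hN1 a
    have hbase : ∀ M : ℕ, N0 ≤ M → (0:ℝ) ≤ ε * M - 10 * c2 * √M := by
      intro M hM
      have h1 : (10 * c2 / ε) ≤ √M := by
        apply Real.le_sqrt_of_sq_le
        exact hN0.1.trans (by exact_mod_cast hM)
      rw [div_le_iff₀ hε] at h1
      have h2 : √(M:ℝ) * √M = M := Real.mul_self_sqrt (by positivity)
      nlinarith [Real.sqrt_nonneg (M:ℝ)]
    rcases lt_or_ge N (2 * N0) with hlt | hge
    · obtain ⟨j₀, hj₀, hmin⟩ := Finset.exists_min_image (blk a N) s ⟨a, by rw [mem_blk]; omega⟩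
      have hz : ∑ j ∈ (blk a N).erase j₀, gcl ρ (s j) ≤ 0 := by
        apply Finset.sum_nonpos
        intro j hj
        rw [Finset.mem_erase] at hj
        have hj0' := mem_blk.mp hj₀
        have hj' := mem_blk.mp hj.2
        have h1 := hlow (2 * N0) j₀ j (Ne.symm hj.1) (by rw [abs_le]; push_cast; constructor <;> omega) (hmin j hj.2)
        push_cast at h1
        have h2 : ρ < s j := by rw [hρ]; refine lt_of_lt_of_le ?_ h1; apply half_lt_self; positivity
        unfold gcl
        rw [if_neg (by linarith)]
      exact ⟨j₀, hj₀, hmin, fun _ => hz, fun h => hz.trans (hbase N h)⟩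
    · have hN2 : 2 ≤ N := by omega
      set N1 := N / 2 with hN1d
      set N2 := N - N / 2 with hN2d
      obtain ⟨j1, hj1, hm1, -, hb1⟩ := ih N1 (by omega) (by omega) a
      obtain ⟨j2, hj2, hm2, -, hb2⟩ := ih N2 (by omega) (by omega) (a + N1)
      have hb1 := hb1 (by omega)
      have hb2 := hb2 (by omega)
      have hj1' := mem_blk.mp hj1
      have hj2' := mem_blk.mp hj2
      have hun : blk a N = blk a N1 ∪ blk (a + N1) N2 := by
        ext b; rw [Finset.mem_union, mem_blk, mem_blk, mem_blk]; omega
      have hdis : Disjoint (blk a N1) (blk (a + N1) N2) := by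
        rw [Finset.disjoint_left]; intro b; rw [mem_blk, mem_blk]; omega
      have hsum : ∑ j ∈ blk a N, gcl ρ (s j) = gcl ρ (s j1) + gcl ρ (s j2) +
          (∑ j ∈ (blk a N1).erase j1, gcl ρ (s j) + ∑ j ∈ (blk (a + N1) N2).erase j2, gcl ρ (s j)) := by
        rw [hun, Finset.sum_union hdis, ← Finset.add_sum_erase _ _ hj1, ← Finset.add_sum_erase _ _ hj2]
        ring
      have hne : j1 ≠ j2 := by omega
      have hN2r : (2:ℝ) ≤ N := by exact_mod_cast hN2
      have hgb : ∀ j : ℤ, σ / (2 * (N:ℝ) ^ κ) ≤ s j → gcl ρ (s j) ≤ c2 * √N := by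
        intro j hj
        have hp : 0 < σ / (2 * (N:ℝ) ^ κ) := by positivity
        have hsq : 1 ≤ √(N:ℝ) := Real.one_le_sqrt.mpr (by linarith)
        apply gcl_le (by positivity)
        refine le_trans ?_ hj
        rw [← Real.log_le_log_iff (Real.exp_pos _) hp, Real.log_exp]
        rw [Real.log_div (by positivity) (by positivity), Real.log_mul (by positivity) (by positivity), Real.log_pow]
        have h1 : Real.log (N:ℝ) ≤ 2 * √N := by
          have := Real.log_le_sub_one_of_pos (show 0 < √(N:ℝ) by positivity)
          rw [Real.log_sqrt (by positivity)] at this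
          linarith
        have h2 : Real.log (2 / σ) = Real.log 2 - Real.log σ := Real.log_div (by norm_num) (by positivity)
        rw [hc2]
        nlinarith [mul_le_mul_of_nonneg_left h1 (Nat.cast_nonneg κ : (0:ℝ) ≤ κ)]
      have hNN : (N1:ℝ) + N2 = N := by
        have : N1 + N2 = N := by omega
        exact_mod_cast this
      have hsq1 : 0.55 * √(N:ℝ) ≤ √(N1:ℝ) := by
        apply Real.le_sqrt_of_sq_le
        rw [mul_pow, Real.sq_sqrt (by positivity)]
        have : N ≤ 3 * N1 := by omega
        have : (N:ℝ) ≤ 3 * N1 := by exact_mod_cast this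
        norm_num; linarith
      have hsq2 : 0.55 * √(N:ℝ) ≤ √(N2:ℝ) := by
        apply Real.le_sqrt_of_sq_le
        rw [mul_pow, Real.sq_sqrt (by positivity)]
        have : N ≤ 3 * N2 := by omega
        have : (N:ℝ) ≤ 3 * N2 := by exact_mod_cast this
        norm_num; linarith
      have hfin : ε * N1 - 10 * c2 * √N1 + (ε * N2 - 10 * c2 * √N2) + c2 * √N ≤ ε * N - 10 * c2 * √N := by
        rw [← hNN, mul_add]
        rw [hNN]
        nlinarith [mul_le_mul_of_nonneg_left hsq1 hc2n, mul_le_mul_of_nonneg_left hsq2 hc2n]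
      have hin1 : j1 ∈ blk a N := by rw [hun]; exact Finset.mem_union_left _ hj1
      have hin2 : j2 ∈ blk a N := by rw [hun]; exact Finset.mem_union_right _ hj2
      rcases le_total (s j1) (s j2) with hle | hle
      · refine ⟨j1, hin1, ?_, fun h => by omega, fun _ => ?_⟩
        · intro j hj
          rw [hun, Finset.mem_union] at hj
          rcases hj with hj | hj
          · exact hm1 j hj
          · exact hle.trans (hm2 j hj)
        · have := hgb j2 (hlow N j1 j2 hne (by rw [abs_le]; constructor <;> omega) hle)
          have e := Finset.add_sum_erase (blk a N) (fun j => gcl ρ (s j)) hin1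
          linarith
      · refine ⟨j2, hin2, ?_, fun h => by omega, fun _ => ?_⟩
        · intro j hj
          rw [hun, Finset.mem_union] at hj
          rcases hj with hj | hj
          · exact hle.trans (hm1 j hj)
          · exact hm2 j hj
        · have := hgb j1 (hlow N j2 j1 hne.symm (by rw [abs_le]; constructor <;> omega) hle)
          have e := Finset.add_sum_erase (blk a N) (fun j => gcl ρ (s j)) hin2
          linarith
  intro N hN a
  obtain ⟨j₀, h1, h2, h3, h4⟩ := key N hN a
  refine ⟨j₀, h1, h2, ?_⟩
  rcases lt_or_ge N (2 * N0) with hlt | hge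
  · exact (h3 hlt).trans (by positivity)
  · have h5 := h4 (by omega)
    have : 0 ≤ 10 * c2 * √(N:ℝ) := by positivity
    linarith

lemma T1e {α σ : ℝ} {κ : ℕ} (hD : Dio α σ κ) {r : ℝ} (hr0 : 0 < r) (hr1 : r < 1) :
    ∃ C : ℝ, 0 ≤ C ∧ ∀ (t : ℝ) (a : ℤ) (N : ℕ) (c : ℤ),
      |∑ b ∈ (blk a N).erase c, Real.log ‖1 - r * ez (t + b * α)‖| ≤ C := by
  obtain ⟨C, hC0, hC⟩ := T1 hD hr0 hr1
  have hl2 : 0 ≤ Real.log 2 := Real.log_nonneg (by norm_num)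
  have hlr : 0 ≤ -Real.log (1 - r) := by
    have := Real.log_nonpos (by linarith : 0 ≤ 1 - r) (by linarith); linarith
  refine ⟨C + (Real.log 2 - Real.log (1 - r)), by linarith, fun t a N c => ?_⟩
  have h1 : |∑ b ∈ blk a N, Real.log ‖1 - r * ez (t + b * α)‖| ≤ C := by
    rw [blk_sum]
    have := hC (t + a * α) N
    convert this using 6
    push_cast; ring_nf
  by_cases hc : c ∈ blk a N
  · have e := Finset.add_sum_erase (blk a N) (fun b => Real.log ‖1 - r * ez (t + b * α)‖) hc
    have b1 : Real.log ‖1 - r * ez (t + c * α)‖ ≤ Real.log 2 :=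
      Real.log_le_log (lt_of_lt_of_le (by linarith) (one_sub_r_pos hr0 hr1 _)) (one_sub_r_le hr0 hr1 _)
    have b2 : Real.log (1 - r) ≤ Real.log ‖1 - r * ez (t + c * α)‖ :=
      Real.log_le_log (by linarith) (one_sub_r_pos hr0 hr1 _)
    rw [abs_le] at h1 ⊢
    constructor <;> linarith [h1.1, h1.2]
  · rw [Finset.erase_eq_of_notMem hc]; linarith

lemma T2 {α σ : ℝ} {κ : ℕ} (hD : Dio α σ κ) {ε : ℝ} (hε : 0 < ε) :
    ∃ C : ℝ, 0 ≤ C ∧ ∀ (t : ℝ) (a : ℤ) (N : ℕ) (c : ℤ),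
      ∏ b ∈ (blk a N).erase c, sn (t + b * α) ≤ Real.exp (ε * N + C) := by
  set u := min ε (1/2) with hu
  have hu0 : 0 < u := lt_min hε (by norm_num)
  have hu1 : u ≤ 1/2 := min_le_right _ _
  have hr0 : 0 < 1 - u := by linarith
  have hr1 : 1 - u < 1 := by linarith
  obtain ⟨C, hC0, hC⟩ := T1e hD hr0 hr1
  refine ⟨C, hC0, fun t a N c => ?_⟩
  have hc : 2 / (1 + (1 - u)) ≤ Real.exp u := by
    have : 2 / (1 + (1 - u)) ≤ 1 + u := by
      rw [div_le_iff₀ (by linarith)]; nlinarith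
    exact this.trans (by linarith [Real.add_one_le_exp u])
  calc ∏ b ∈ (blk a N).erase c, sn (t + b * α)
      ≤ ∏ b ∈ (blk a N).erase c, Real.exp (u + Real.log ‖1 - (1 - u : ℝ) * ez (t + b * α)‖) := by
        apply Finset.prod_le_prod (fun b _ => sn_nonneg _)
        intro b _
        have hp : 0 < ‖1 - (1 - u : ℝ) * ez (t + b * α)‖ := by
          have := one_sub_r_pos hr0 hr1 (t + b * α); linarith
        rw [Real.exp_add, Real.exp_log hp]
        refine (sn_le_r hr0 hr1 _).trans ?_
        gcongr
    _ = Real.exp (((blk a N).erase c).card * u + ∑ b ∈ (blk a N).erase c, Real.log ‖1 - (1 - u : ℝ) * ez (t + b * α)‖) := by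
        rw [← Real.exp_sum, Finset.sum_add_distrib, Finset.sum_const, nsmul_eq_mul]
    _ ≤ _ := by
        apply Real.exp_le_exp.mpr
        have h1 : (((blk a N).erase c).card : ℝ) ≤ N := by
          have := Finset.card_erase_le (s := blk a N) (a := c)
          rw [blk_card] at this
          exact_mod_cast this
        have h2 := (abs_le.mp (hC t a N c)).2
        have h3 : u ≤ ε := min_le_left _ _
        nlinarith [(Nat.cast_nonneg N : (0:ℝ) ≤ N)]

lemma T3 {α σ : ℝ} {κ : ℕ} (hD : Dio α σ κ) {ε : ℝ} (hε : 0 < ε) :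
    ∃ C : ℝ, 0 ≤ C ∧ ∀ (t : ℝ) (a : ℤ) (N : ℕ) (c : ℤ) (β : ℝ), 0 ≤ β →
      (∀ b ∈ (blk a N).erase c, Real.exp (-β) ≤ sn (t + b * α)) →
      Real.exp (-(ε * N + C + β)) ≤ ∏ b ∈ (blk a N).erase c, sn (t + b * α) := by
  obtain ⟨ρ, hρ0, hρ1, hsep⟩ := sep hD.1 hD.2.1 κ (half_pos hε)
  set u := min (ε / 2 * ρ) (min (1/2) (1 - ρ)) with hu
  have hu0 : 0 < u := lt_min (by positivity) (lt_min (by norm_num) (by linarith))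
  have hu1 : u ≤ 1/2 := (min_le_right _ _).trans (min_le_left _ _)
  have hu2 : u ≤ 1 - ρ := (min_le_right _ _).trans (min_le_right _ _)
  have hu3 : u ≤ ε / 2 * ρ := min_le_left _ _
  have hr0 : 0 < 1 - u := by linarith
  have hr1 : 1 - u < 1 := by linarith
  obtain ⟨C, hC0, hC⟩ := T1e hD hr0 hr1
  refine ⟨C, hC0, fun t a N c β hβ hlow => ?_⟩
  rcases Nat.eq_zero_or_pos N with rfl | hN
  · have : blk a 0 = ∅ := by simp [blk]
    rw [this]; simp; linarith
  obtain ⟨j₀, hj₀, hmin, hsum⟩ := hsep (fun b => sn (t + b * α)) (fun j => sn_nonneg _) (by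
    intro i j hij
    refine (hD.2.2 (i - j) (sub_ne_zero.mpr hij)).trans ?_
    rw [show ((i - j : ℤ) : ℝ) * α = (t + i * α) - (t + j * α) by push_cast; ring]
    exact sn_sub_le _ _) N hN a
  have hpos : ∀ b ∈ (blk a N).erase c, 0 < sn (t + b * α) := fun b hb =>
    lt_of_lt_of_le (Real.exp_pos _) (hlow b hb)
  have hg : ∑ b ∈ (blk a N).erase c, gcl ρ (sn (t + b * α)) ≤ ε / 2 * N + β := by
    by_cases hjc : j₀ = c
    · rw [← hjc]; linarith
    · have h1 : ∑ b ∈ (blk a N).erase c, gcl ρ (sn (t + b * α)) ≤ ∑ b ∈ (blk a N), gcl ρ (sn (t + b * α)) :=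
        Finset.sum_le_sum_of_subset_of_nonneg (Finset.erase_subset _ _)
          (fun b _ _ => gcl_nonneg hρ1.le (sn_nonneg _))
      have e := Finset.add_sum_erase (blk a N) (fun b => gcl ρ (sn (t + b * α))) hj₀
      have h2 := gcl_le (ρ := ρ) hβ (hlow j₀ (Finset.mem_erase.mpr ⟨hjc, hj₀⟩))
      linarith
  have hterm : ∀ b ∈ (blk a N).erase c, Real.log ‖1 - (1 - u : ℝ) * ez (t + b * α)‖ - ε / 2 ≤
      Real.log (sn (t + b * α)) + gcl ρ (sn (t + b * α)) := by
    intro b hb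
    have hs := hpos b hb
    have hle := r_le_sn hr0 hr1 (t + b * α)
    have hp : 0 < ‖1 - (1 - u : ℝ) * ez (t + b * α)‖ := by
      have := one_sub_r_pos hr0 hr1 (t + b * α); linarith
    unfold gcl
    split_ifs with h
    · have : Real.log ‖1 - (1 - u : ℝ) * ez (t + b * α)‖ ≤ 0 := Real.log_nonpos (norm_nonneg _) (by linarith)
      linarith
    · push Not at h
      have h1 : ‖1 - (1 - u : ℝ) * ez (t + b * α)‖ ≤ sn (t + b * α) * Real.exp (ε / 2) := by
        have : sn (t + b * α) * (ε / 2 + 1) ≤ sn (t + b * α) * Real.exp (ε / 2) := by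
          gcongr; exact Real.add_one_le_exp _
        nlinarith
      have h2 := Real.log_le_log hp h1
      rw [Real.log_mul hs.ne' (Real.exp_pos _).ne', Real.log_exp] at h2
      linarith
  have hS := Finset.sum_le_sum hterm
  rw [Finset.sum_sub_distrib, Finset.sum_add_distrib, Finset.sum_const, nsmul_eq_mul] at hS
  have h1 : (((blk a N).erase c).card : ℝ) ≤ N := by
    have := Finset.card_erase_le (s := blk a N) (a := c)
    rw [blk_card] at this
    exact_mod_cast this
  have h2 := (abs_le.mp (hC t a N c)).1
  have h3 : ∏ b ∈ (blk a N).erase c, sn (t + b * α) = Real.exp (∑ b ∈ (blk a N).erase c, Real.log (sn (t + b * α))) := by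
    rw [Real.exp_sum]
    exact Finset.prod_congr rfl fun b hb => (Real.exp_log (hpos b hb)).symm
  rw [h3]
  apply Real.exp_le_exp.mpr
  nlinarith

def vp (lam t : ℝ) : ℝ := 2 * lam * Real.cos (2 * π * t)

def U (lam α E : ℝ) : ℕ → ℝ → ℝ
  | 0, _ => 1
  | 1, t => E - vp lam t
  | (k + 2), t => (E - vp lam (t + (k + 1) * α)) * U lam α E (k + 1) t - U lam α E k t

lemma U_left (lam α E : ℝ) : ∀ (k : ℕ) (t : ℝ),
    U lam α E (k + 2) t = (E - vp lam t) * U lam α E (k + 1) (t + α) - U lam α E k (t + 2 * α)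
  | 0, t => by simp [U]; ring
  | 1, t => by
      simp only [U]; push_cast
      rw [show t + α + (0 + 1) * α = t + (1 + 1) * α by ring, show t + (0+1) * α = t + α by ring, show t + 2 * α = t + (1 + 1) * α by ring]; ring
  | (k + 2), t => by
      have h1 := U_left lam α E (k + 1) t
      have h0 := U_left lam α E k t
      have e1 : U lam α E (k + 2 + 2) t = (E - vp lam (t + (k + 3) * α)) * U lam α E (k + 1 + 2) t - U lam α E (k + 2) t := by
        rw [U]; push_cast; rw [show (k:ℝ) + 2 + 1 = k + 3 by ring]
      have e2 : U lam α E (k + 2 + 1) (t + α) = (E - vp lam (t + (k + 3) * α)) * U lam α E (k + 1 + 1) (t + α) - U lam α E (k + 1) (t + α) := by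
        rw [show k + 2 + 1 = (k + 1) + 2 from rfl, U]; push_cast; rw [show t + α + ((k:ℝ) + 1 + 1) * α = t + (k + 3) * α by ring]
      have e3 : U lam α E (k + 2) (t + 2 * α) = (E - vp lam (t + (k + 3) * α)) * U lam α E (k + 1) (t + 2 * α) - U lam α E k (t + 2 * α) := by
        rw [U]; rw [show t + 2 * α + ((k:ℝ) + 1) * α = t + (k + 3) * α by ring]
      rw [e1, e2, e3, h1, h0]
      ring

lemma vp_neg (lam t : ℝ) : vp lam (-t) = vp lam t := by
  unfold vp; rw [mul_neg, Real.cos_neg]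

lemma U_rev (lam α E : ℝ) : ∀ (k : ℕ) (t : ℝ),
    U lam α E k (-(t + (k - 1) * α)) = U lam α E k t
  | 0, t => by simp [U]
  | 1, t => by simp [U, vp_neg]
  | (k + 2), t => by
      have h1 := U_rev lam α E (k + 1) (t + α)
      have h0 := U_rev lam α E k (t + 2 * α)
      rw [U_left lam α E k t, U, ← h1, ← h0]
      push_cast
      rw [show -(t + (↑k + 2 - 1) * α) + (↑k + 1) * α = -t by ring, vp_neg]
      rw [show -(t + (↑k + 2 - 1) * α) = -(t + α + (↑k + 1 - 1) * α) by ring]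
      rw [show -(t + 2 * α + (↑k - 1) * α) = -(t + α + (↑k + 1 - 1) * α) by ring]

open Polynomial in
def TP (k : ℕ) (f : ℝ → ℝ) : Prop := ∃ P R : ℝ[X], P.degree ≤ k ∧ R.degree < k ∧
  ∀ t, f t = P.eval (Real.cos (2 * π * t)) + Real.sin (2 * π * t) * R.eval (Real.cos (2 * π * t))

open Polynomial in
lemma TP_mulcos {k : ℕ} {f : ℝ → ℝ} (h : TP k f) (E A B : ℝ) :
    TP (k + 1) (fun t => (E - (A * Real.cos (2 * π * t) + B * Real.sin (2 * π * t))) * f t) := by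
  obtain ⟨P, R, hP, hR, hf⟩ := h
  refine ⟨C E * P - C A * (X * P) - C B * ((1 - X ^ 2) * R), C E * R - C A * (X * R) - C B * P, ?_, ?_, ?_⟩
  · have hR' : R.natDegree + 1 ≤ k ∨ R = 0 := by
      by_cases h0 : R = 0
      · exact Or.inr h0
      · left; rw [Polynomial.degree_eq_natDegree h0] at hR; have : R.natDegree < k := by exact_mod_cast hR
        omega
    have hPn : P.natDegree ≤ k := Polynomial.natDegree_le_of_degree_le hP
    apply Polynomial.degree_le_of_natDegree_le
    refine (Polynomial.natDegree_sub_le_of_le (Polynomial.natDegree_sub_le_of_le (n := k + 1) (m := k + 1) ?_ ?_) (n := k + 1) ?_).trans (by simp)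
    · exact (Polynomial.natDegree_C_mul_le _ _).trans (by omega)
    · refine (Polynomial.natDegree_C_mul_le _ _).trans ((Polynomial.natDegree_mul_le).trans ?_)
      simp; omega
    · rcases hR' with hR' | hR'
      · refine (Polynomial.natDegree_C_mul_le _ _).trans ((Polynomial.natDegree_mul_le).trans ?_)
        have : (1 - X ^ 2 : ℝ[X]).natDegree ≤ 2 := by
          refine (Polynomial.natDegree_sub_le _ _).trans ?_
          simp
        omega
      · simp [hR']
  · have hlt : ∀ Q : ℝ[X], Q.degree ≤ (k:ℕ) → Q.degree < ((k + 1 : ℕ) : WithBot ℕ) := fun Q h =>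
      lt_of_le_of_lt h (by exact_mod_cast Nat.lt_succ_self k)
    apply hlt
    have hRl : R.degree ≤ k := hR.le
    have h1 : ∀ (c : ℝ) (Q : ℝ[X]), (C c * Q).degree ≤ Q.degree := fun c Q => by
      by_cases hc : c = 0
      · simp [hc]
      · rw [Polynomial.degree_C_mul hc]
    refine (Polynomial.degree_sub_le _ _).trans (max_le ((Polynomial.degree_sub_le _ _).trans (max_le ?_ ?_)) ?_)
    · exact (h1 _ _).trans hRl
    · refine (h1 _ _).trans ?_
      by_cases h0 : R = 0
      · simp [h0]
      · rw [Polynomial.degree_mul, Polynomial.degree_X, Polynomial.degree_eq_natDegree h0]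
        rw [Polynomial.degree_eq_natDegree h0] at hR
        have : R.natDegree < k := by exact_mod_cast hR
        have : 1 + R.natDegree ≤ k := by omega
        exact_mod_cast this
    · exact (h1 _ _).trans hP
  · intro t
    simp only [hf t, Polynomial.eval_sub, Polynomial.eval_mul, Polynomial.eval_C, Polynomial.eval_X, Polynomial.eval_one, Polynomial.eval_pow]
    have := Real.sin_sq_add_cos_sq (2 * π * t)
    linear_combination (-B * R.eval (Real.cos (2 * π * t))) * this

open Polynomial in
lemma TP_sub {k : ℕ} {f g : ℝ → ℝ} (h : TP k f) (h' : TP k g) : TP k (fun t => f t - g t) := by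
  obtain ⟨P, R, hP, hR, hf⟩ := h
  obtain ⟨P', R', hP', hR', hf'⟩ := h'
  refine ⟨P - P', R - R', (Polynomial.degree_sub_le _ _).trans (max_le hP hP'),
    lt_of_le_of_lt (Polynomial.degree_sub_le _ _) (max_lt hR hR'), fun t => ?_⟩
  simp [hf, hf']; ring

lemma TP_mono {k l : ℕ} {f : ℝ → ℝ} (h : TP k f) (hkl : k ≤ l) : TP l f := by
  obtain ⟨P, R, hP, hR, hf⟩ := h
  exact ⟨P, R, hP.trans (by exact_mod_cast hkl), lt_of_lt_of_le hR (by exact_mod_cast hkl), hf⟩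

lemma vp_shift (lam t s : ℝ) : vp lam (t + s) =
    (2 * lam * Real.cos (2 * π * s)) * Real.cos (2 * π * t) + (-(2 * lam * Real.sin (2 * π * s))) * Real.sin (2 * π * t) := by
  unfold vp; rw [mul_add, Real.cos_add]; ring

lemma U_TP (lam α E s : ℝ) : ∀ k : ℕ, TP k (fun t => U lam α E k (t + s))
  | 0 => ⟨1, 0, by simp, by simp, fun t => by simp [U]⟩
  | 1 => by
      have h0 := TP_mulcos (U_TP lam α E s 0) E (2 * lam * Real.cos (2 * π * s)) (-(2 * lam * Real.sin (2 * π * s)))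
      convert h0 using 2
      rw [← vp_shift]; simp [U]
  | (k + 2) => by
      have h1 := TP_mulcos (U_TP lam α E s (k + 1)) E (2 * lam * Real.cos (2 * π * (s + (k + 1) * α))) (-(2 * lam * Real.sin (2 * π * (s + (k + 1) * α))))
      have h0 := TP_mono (U_TP lam α E s k) (show k ≤ k + 2 by omega)
      convert TP_sub h1 h0 using 2
      rw [← vp_shift, U]
      simp [add_assoc]

open Polynomial in
lemma U_poly (lam α E : ℝ) (k : ℕ) : ∃ Q : ℝ[X], Q.degree ≤ k ∧
    ∀ t, U lam α E k (t - (k - 1) / 2 * α) = Q.eval (Real.cos (2 * π * t)) := by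
  obtain ⟨P, R, hP, hR, hf⟩ := U_TP lam α E (-((k - 1) / 2 * α)) k
  refine ⟨P, hP, fun t => ?_⟩
  have h1 := hf t
  have h2 := hf (-t)
  have h3 := U_rev lam α E k (t + -((k - 1) / 2 * α))
  rw [show -(t + -((k - 1) / 2 * α) + (k - 1) * α) = -t + -((k - 1) / 2 * α) by ring] at h3
  simp only at h1 h2
  rw [mul_neg, Real.cos_neg, Real.sin_neg] at h2
  rw [sub_eq_add_neg]
  linarith

lemma vp_abs {lam : ℝ} (h : 0 ≤ lam) (t : ℝ) : |vp lam t| ≤ 2 * lam := by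
  unfold vp
  rw [abs_mul, abs_of_nonneg (by positivity : 0 ≤ 2 * lam)]
  have := Real.abs_cos_le_one (2 * π * t)
  nlinarith

lemma U_le {lam α E B : ℝ} (h : 0 ≤ lam) (hB : |E| + 2 * lam + 1 ≤ B) : ∀ (k : ℕ) (t : ℝ),
    |U lam α E k t| ≤ B ^ k
  | 0, t => by simp [U]
  | 1, t => by
      simp only [U, pow_one]
      have := abs_sub E (vp lam t); have := vp_abs h t; linarith
  | (k + 2), t => by
      have h1 := U_le (α := α) h hB (k + 1) t
      have h0 := U_le (α := α) h hB k t
      have hB1 : 1 ≤ B := by have := abs_nonneg E; linarith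
      rw [U]
      have a1 := abs_sub ((E - vp lam (t + (k + 1) * α)) * U lam α E (k + 1) t) (U lam α E k t)
      rw [abs_mul] at a1
      have a2 : |E - vp lam (t + (k + 1) * α)| ≤ B - 1 := by
        have := abs_sub E (vp lam (t + (k + 1) * α)); have := vp_abs h (t + (k + 1) * α); linarith
      have a3 : |E - vp lam (t + (k + 1) * α)| * |U lam α E (k + 1) t| ≤ (B - 1) * B ^ (k + 1) := by
        gcongr
      have a4 : B ^ k ≤ B ^ (k + 1) := pow_le_pow_right₀ hB1 (by omega)
      have a5 : B ^ (k + 2) = B * B ^ (k + 1) := by ring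
      rw [a5]; nlinarith

def MU (lam α E : ℝ) (k : ℕ) : ℝ := ⨆ t : ℝ, |U lam α E k t|

lemma bdd_U {lam α E : ℝ} (h : 0 ≤ lam) (k : ℕ) : BddAbove (Set.range fun t => |U lam α E k t|) :=
  ⟨_, by rintro _ ⟨t, rfl⟩; exact U_le h le_rfl k t⟩

lemma U_le_MU {lam α E : ℝ} (h : 0 ≤ lam) (k : ℕ) (t : ℝ) : |U lam α E k t| ≤ MU lam α E k :=
  le_ciSup (bdd_U h k) t

lemma MU_le {lam α E B : ℝ} (h : 0 ≤ lam) (hB : |E| + 2 * lam + 1 ≤ B) (k : ℕ) : MU lam α E k ≤ B ^ k :=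
  ciSup_le fun t => U_le h hB k t

def qz (lam α E : ℝ) : ℕ → ℂ → ℂ
  | 0, _ => 1
  | 1, z => E * z - lam * (z ^ 2 + 1)
  | (k + 2), z => (E * z - lam * (ez ((k + 1) * α) * z ^ 2 + ez (-((k + 1) * α)))) * qz lam α E (k + 1) z
      - z ^ 2 * qz lam α E k z

lemma qz_diff (lam α E : ℝ) : ∀ k, Differentiable ℂ (qz lam α E k)
  | 0 => by
      have : qz lam α E 0 = fun _ => 1 := by funext z; rw [qz]
      rw [this]; fun_prop
  | 1 => by
      have : qz lam α E 1 = fun (z : ℂ) => (E : ℂ) * z - (lam : ℂ) * (z ^ 2 + 1) := by funext z; rw [qz]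
      rw [this]; fun_prop
  | (k + 2) => by
      have h1 := qz_diff lam α E (k + 1)
      have h0 := qz_diff lam α E k
      have : qz lam α E (k + 2) = fun z => (E * z - lam * (ez ((k + 1) * α) * z ^ 2 + ez (-((k + 1) * α)))) * qz lam α E (k + 1) z
      - z ^ 2 * qz lam α E k z := by funext z; rw [qz]
      rw [this]; fun_prop

lemma qz_zero {lam : ℝ} (hl : 0 ≤ lam) (α E : ℝ) : ∀ k, ‖qz lam α E k 0‖ = lam ^ k
  | 0 => by simp [qz]
  | 1 => by simp [qz, abs_of_nonneg hl]
  | (k + 2) => by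
      rw [qz]
      simp [ez_norm, abs_of_nonneg hl, qz_zero hl α E (k + 1)]
      ring

lemma vp_ez (lam t s : ℝ) : ez t * (vp lam (t + s) : ℂ) = lam * (ez s * ez t ^ 2 + ez (-s)) := by
  have h : (vp lam (t + s) : ℂ) = lam * (ez t * ez s + ez (-t) * ez (-s)) := by
    unfold vp
    rw [← ez_add, ← ez_add]
    unfold ez
    push_cast
    rw [show -(t:ℂ) + -s = -(t + s) by ring, Complex.cos]
    ring_nf
  have h2 : ez t * ez (-t) = 1 := by rw [← ez_add]; simp [ez]
  rw [h]
  linear_combination (lam * ez (-s)) * h2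

lemma qz_ez (lam α E t : ℝ) : ∀ k, qz lam α E k (ez t) = ez t ^ k * (U lam α E k t : ℂ)
  | 0 => by simp [qz, U]
  | 1 => by
      simp only [qz, U]
      have := vp_ez lam t 0
      rw [add_zero] at this
      have h0 : ez 0 = 1 := by simp [ez]
      rw [neg_zero, h0] at this
      push_cast
      linear_combination this
  | (k + 2) => by
      rw [qz, U, qz_ez lam α E t (k + 1), qz_ez lam α E t k, ← vp_ez]
      push_cast
      ring

lemma le_MU {lam α E : ℝ} (hl : 0 ≤ lam) (k : ℕ) : lam ^ k ≤ MU lam α E k := by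
  rw [← qz_zero hl α E k]
  have hd := (qz_diff lam α E k)
  apply Complex.norm_le_of_forall_mem_frontier_norm_le (U := Metric.ball (0:ℂ) 1) Metric.isBounded_ball
    hd.diffContOnCl
  · intro z hz
    rw [frontier_ball (0:ℂ) one_ne_zero] at hz
    have hz1 : ‖z‖ = 1 := by simpa using hz
    have : z = ez (Complex.arg z / (2 * π)) := by
      unfold ez
      rw [mul_div_cancel₀ _ (by positivity)]
      have := Complex.norm_mul_exp_arg_mul_I z
      rw [hz1] at this
      simpa using this.symm
    rw [this, qz_ez, norm_mul, norm_pow, ez_norm, one_pow, one_mul, Complex.norm_real]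
    exact U_le_MU hl k _
  · exact subset_closure (by simp)

lemma MU_pos {lam α E : ℝ} (hl : 0 < lam) (k : ℕ) : 0 < MU lam α E k :=
  lt_of_lt_of_le (by positivity) (le_MU hl.le k)

/- good scales -/
lemma goodScale {lam B : ℝ} (hl : 1 < lam) (hB : 1 ≤ B) {ε : ℝ} (hε : 0 < ε) :
    ∃ G : ℕ, 1 ≤ G ∧ ∀ (α E : ℝ), |E| + 2 * lam + 1 ≤ B → ∀ K : ℕ, 1 ≤ K →
      ∃ k : ℕ, K ≤ k ∧ k ≤ G * K ∧ ∀ j ≤ k,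
        MU lam α E j ≤ MU lam α E k * Real.exp (-(Real.log lam - ε) * (k - j)) := by
  have hlB : 0 ≤ Real.log B := Real.log_nonneg hB
  obtain ⟨G0, hG0⟩ := exists_nat_gt ((Real.log B) / ε + 1)
  have hG1 : 1 ≤ G0 := by
    have : (0:ℝ) < G0 := by have : 0 ≤ Real.log B / ε := by positivity
                            linarith
    exact_mod_cast this
  refine ⟨G0, hG1, fun α E hE K hK => ?_⟩
  have hl0 : 0 < lam := by linarith
  set g : ℕ → ℝ := fun j => Real.log (MU lam α E j) - j * Real.log lam + ε * j with hg
  obtain ⟨k, hk, hmax⟩ := Finset.exists_max_image (Finset.range (G0 * K + 1)) g ⟨0, by simp⟩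
  rw [Finset.mem_range] at hk
  have hlog : ∀ j : ℕ, j * Real.log lam ≤ Real.log (MU lam α E j) ∧ Real.log (MU lam α E j) ≤ j * Real.log B := by
    intro j
    constructor
    · rw [← Real.log_pow]; exact Real.log_le_log (by positivity) (le_MU hl0.le j)
    · rw [← Real.log_pow]; exact Real.log_le_log (MU_pos hl0 j) (MU_le hl0.le hE j)
  have hll : 0 < Real.log lam := Real.log_pos hl
  have hKr : (1:ℝ) ≤ K := by exact_mod_cast hK
  refine ⟨k, ?_, by omega, ?_⟩
  · by_contra hlt
    push Not at hlt
    have h1 := hmax (G0 * K) (by simp)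
    simp only [hg] at h1
    have h2 := (hlog (G0 * K)).1
    have h3 := (hlog k).2
    push_cast at h1 h2
    have hkK : (k:ℝ) ≤ K := by exact_mod_cast hlt.le
    have hk0 : (0:ℝ) ≤ k := Nat.cast_nonneg k
    have h4 : Real.log B + ε < G0 * ε := by
      have : (Real.log B / ε + 1) * ε < G0 * ε := by gcongr
      rwa [add_mul, div_mul_cancel₀ _ hε.ne', one_mul] at this
    have h5 : (Real.log B + ε) * K < G0 * ε * K := by gcongr
    nlinarith
  · intro j hj
    have h1 := hmax j (by rw [Finset.mem_range]; omega)
    simp only [hg] at h1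
    rw [← Real.log_le_log_iff (MU_pos hl0 j) (mul_pos (MU_pos hl0 k) (Real.exp_pos _)),
      Real.log_mul (MU_pos hl0 k).ne' (Real.exp_pos _).ne', Real.log_exp]
    linarith

/- Poisson formula -/
lemma poisson {lam α E θ : ℝ} {φ : ℤ → ℝ} (h : IsEigenfunction (amoPot lam α θ) E φ) (a : ℤ) (i : ℕ) :
    ∀ j : ℕ, U lam α E (i + 1 + j) (θ + a * α) * φ (a + i) =
      U lam α E j (θ + ((a + i + 1 : ℤ) : ℝ) * α) * φ (a - 1) + U lam α E i (θ + a * α) * φ (a + i + 1 + j) := by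
  have hs : ∀ n : ℤ, φ (n + 1) = (E - vp lam (θ + n * α)) * φ n - φ (n - 1) := by
    intro n
    have := h n
    unfold amoPot at this
    unfold vp
    linarith
  have h0 : ∀ i : ℕ, U lam α E (i + 1) (θ + a * α) * φ (a + i) = φ (a - 1) + U lam α E i (θ + a * α) * φ (a + i + 1) := by
    intro i
    induction i with
    | zero =>
      have := hs a
      simp only [U, Nat.cast_zero, add_zero]
      linarith
    | succ i ih =>
      have := hs (a + i + 1)
      rw [U]
      push_cast at this ⊢
      rw [show a + (i:ℤ) + 1 - 1 = a + i by ring] at this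
      rw [show a + ((i:ℤ) + 1) = a + i + 1 by ring, this]
      rw [show θ + a * α + ((i:ℝ) + 1) * α = θ + (a + i + 1) * α by ring]
      linear_combination ih
  intro j
  induction j using Nat.twoStepInduction with
  | zero => simp only [U, Nat.cast_zero, add_zero]; rw [h0]; ring
  | one =>
      have h1 := h0 i
      have := hs (a + i + 1)
      rw [U]
      simp only [U]
      push_cast at this ⊢
      rw [show a + (i:ℤ) + 1 - 1 = a + i by ring] at this
      rw [this]
      rw [show θ + a * α + ((i:ℝ) + 1) * α = θ + (a + i + 1) * α by ring]
      linear_combination (E - vp lam (θ + (a + i + 1) * α)) * h1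
  | more j ih0 ih1 =>
      have := hs (a + i + 1 + (j + 1))
      rw [show i + 1 + (j + 2) = (i + 1 + j) + 2 by ring, U, U]
      rw [show i + 1 + (j + 1) = i + 1 + j + 1 by ring] at ih1
      push_cast at this ih0 ih1 ⊢
      rw [show a + (i:ℤ) + 1 + (j + 1) - 1 = a + i + 1 + j by ring] at this
      rw [show a + (i:ℤ) + 1 + (j + 2) = a + i + 1 + (j + 1) + 1 by ring, this]
      rw [show θ + a * α + ((i:ℝ) + 1 + j + 1) * α = θ + (a + i + 1 + (j + 1)) * α by ring]
      rw [show θ + (a + i + 1) * α + ((j:ℝ) + 1) * α = θ + (a + i + 1 + (j + 1)) * α by ring]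
      linear_combination (E - vp lam (θ + (a + i + 1 + (j + 1)) * α)) * ih1 - ih0

/-- window bound -/
lemma winBound {lam α E θ μ Λ : ℝ} {φ : ℤ → ℝ} (hl : 0 < lam)
    (h : IsEigenfunction (amoPot lam α θ) E φ) {k : ℕ}
    (hk : ∀ j ≤ k, MU lam α E j ≤ MU lam α E k * Real.exp (-μ * (k - j)))
    {a p : ℤ} (hU : MU lam α E k ≤ |U lam α E k (θ + a * α)| * Real.exp Λ) (h1 : a ≤ p) (h2 : p < a + k) :
    |φ p| ≤ Real.exp Λ * (Real.exp (-μ * ((p - a + 1 : ℤ) : ℝ)) * |φ (a - 1)| + Real.exp (-μ * ((a + k - p : ℤ) : ℝ)) * |φ (a + k)|) := by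
  obtain ⟨i, rfl⟩ : ∃ i : ℕ, p = a + i := ⟨(p - a).toNat, by omega⟩
  obtain ⟨j, hj⟩ : ∃ j : ℕ, k = i + 1 + j := ⟨k - (i + 1), by omega⟩
  have hp := poisson h a i j
  rw [← hj] at hp
  have e : a + (i:ℤ) + 1 + j = a + k := by rw [hj]; push_cast; ring
  rw [e] at hp
  have hM := MU_pos (α := α) (E := E) hl k
  have b1 := (U_le_MU (α := α) (E := E) hl.le j (θ + ((a + i + 1 : ℤ) : ℝ) * α)).trans (hk j (by omega))
  have b2 := (U_le_MU (α := α) (E := E) hl.le i (θ + a * α)).trans (hk i (by omega))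
  have c1 : (k:ℝ) - j = ((a + i - a + 1 : ℤ) : ℝ) := by rw [hj]; push_cast; ring
  have c2 : (k:ℝ) - i = ((a + k - (a + i) : ℤ) : ℝ) := by push_cast; ring
  rw [c1] at b1
  rw [c2] at b2
  have hab : |U lam α E k (θ + a * α)| * |φ (a + i)| ≤ MU lam α E k * Real.exp (-μ * ((a + i - a + 1 : ℤ) : ℝ)) * |φ (a - 1)|
      + MU lam α E k * Real.exp (-μ * ((a + k - (a + i) : ℤ) : ℝ)) * |φ (a + k)| := by
    rw [← abs_mul, hp]
    refine (abs_add_le _ _).trans ?_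
    rw [abs_mul, abs_mul]
    gcongr
  have : MU lam α E k * |φ (a + i)| ≤ MU lam α E k * (Real.exp Λ * (Real.exp (-μ * ((a + i - a + 1 : ℤ) : ℝ)) * |φ (a - 1)| + Real.exp (-μ * ((a + k - (a + i) : ℤ) : ℝ)) * |φ (a + k)|)) := by
    calc MU lam α E k * |φ (a + i)| ≤ (|U lam α E k (θ + a * α)| * Real.exp Λ) * |φ (a + i)| := by gcongr
      _ = Real.exp Λ * (|U lam α E k (θ + a * α)| * |φ (a + i)|) := by ring
      _ ≤ Real.exp Λ * _ := mul_le_mul_of_nonneg_left hab (Real.exp_pos _).le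
      _ = _ := by ring
  exact le_of_mul_le_mul_left this hM

lemma cos_diff (x y : ℝ) : |Real.cos (2 * π * x) - Real.cos (2 * π * y)| = sn (x - y) * sn (x + y) / 2 := by
  rw [Real.cos_sub_cos]
  unfold sn
  rw [show (2 * π * x + 2 * π * y) / 2 = π * (x + y) by ring, show (2 * π * x - 2 * π * y) / 2 = π * (x - y) by ring]
  simp only [abs_mul, abs_neg, abs_two]
  ring

lemma prod_two {A1 A2 : Finset ℤ} (hd : Disjoint A1 A2) (c : ℤ) (f : ℤ → ℝ) :
    ∏ b ∈ (A1 ∪ A2).erase c, f b = (∏ b ∈ A1.erase c, f b) * ∏ b ∈ A2.erase c, f b := by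
  rw [Finset.erase_union_distrib, Finset.prod_union]
  exact Finset.disjoint_of_subset_left (Finset.erase_subset _ _)
    (Finset.disjoint_of_subset_right (Finset.erase_subset _ _) hd)

lemma interp {α σ : ℝ} {κ : ℕ} (hD : Dio α σ κ) {ε : ℝ} (hε : 0 < ε) :
    ∃ C : ℝ, 0 ≤ C ∧ ∀ (lam E θ : ℝ) (k : ℕ) (a1 a2 : ℤ) (N1 N2 : ℕ) (R β1 β2 : ℝ),
      N1 + N2 = k + 1 → Disjoint (blk a1 N1) (blk a2 N2) → 1 ≤ R → 0 ≤ β1 → 0 ≤ β2 →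
      (∀ a ∈ blk a1 N1 ∪ blk a2 N2, ∀ b ∈ blk a1 N1 ∪ blk a2 N2, |((a - b : ℤ) : ℝ)| ≤ R) →
      (∀ a ∈ blk a1 N1 ∪ blk a2 N2, ∀ b ∈ blk a1 N1, b ≠ a → Real.exp (-β1) ≤ sn (2 * θ + ((a + b + k - 1 : ℤ) : ℝ) * α)) →
      (∀ a ∈ blk a1 N1 ∪ blk a2 N2, ∀ b ∈ blk a2 N2, b ≠ a → Real.exp (-β2) ≤ sn (2 * θ + ((a + b + k - 1 : ℤ) : ℝ) * α)) →
      ∃ a ∈ blk a1 N1 ∪ blk a2 N2, MU lam α E k ≤ |U lam α E k (θ + a * α)| *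
        Real.exp (ε * k + C + 2 * κ * Real.log R + β1 + β2) := by
  set e := ε / 5 with he
  have he0 : 0 < e := by positivity
  obtain ⟨C2, hC2, hT2⟩ := T2 hD he0
  obtain ⟨C3, hC3, hT3⟩ := T3 hD he0
  have hσ := hD.1
  have hσ1 := hD.2.1
  have hls : Real.log σ ≤ 0 := Real.log_nonpos hσ.le hσ1
  refine ⟨ε + 4 * C2 + 4 * C3 - 2 * Real.log σ + |Real.log e|, by have := abs_nonneg (Real.log e); linarith, ?_⟩
  intro lam E θ k a1 a2 N1 N2 R β1 β2 hN hdis hR hβ1 hβ2 hAR hs1 hs2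
  set A := blk a1 N1 ∪ blk a2 N2 with hA
  have hAc : A.card = k + 1 := by rw [hA, Finset.card_union_of_disjoint hdis, blk_card, blk_card, hN]
  obtain ⟨a0, ha0, hmax⟩ := Finset.exists_max_image A (fun a : ℤ => |U lam α E k (θ + a * α)|)
    (Finset.card_pos.mp (by omega))
  refine ⟨a0, ha0, ?_⟩
  set w := |U lam α E k (θ + a0 * α)| with hw
  have hw0 : 0 ≤ w := abs_nonneg _
  obtain ⟨Q, hQd, hQ⟩ := U_poly lam α E k
  set tt : ℤ → ℝ := fun b => θ + (b + (k - 1) / 2) * α with htt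
  set x : ℤ → ℝ := fun b => Real.cos (2 * π * tt b) with hx
  have hNr : (N1:ℝ) + N2 = k + 1 := by exact_mod_cast hN
  have hlR : 0 ≤ Real.log R := Real.log_nonneg hR
  have hQx : ∀ b : ℤ, Q.eval (x b) = U lam α E k (θ + b * α) := by
    intro b
    rw [hx, ← hQ]; congr 1; rw [htt]; ring
  set β0 := κ * Real.log R - Real.log σ with hβ0
  have hβ00 : 0 ≤ β0 := by have : 0 ≤ κ * Real.log R := by positivity
                           linarith
  have hsd : ∀ a ∈ A, ∀ b ∈ A, b ≠ a → Real.exp (-β0) ≤ sn (-(a * α) + b * α) := by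
    intro a ha b hb hba
    have h1 := hD.2.2 (b - a) (sub_ne_zero.mpr hba)
    have h2 := hAR b hb a ha
    have h3 : 0 < |((b - a : ℤ) : ℝ)| := by rw [abs_pos]; exact_mod_cast sub_ne_zero.mpr hba
    rw [show -(a * α) + b * α = ((b - a : ℤ) : ℝ) * α by push_cast; ring]
    refine le_trans ?_ h1
    have h4 : σ / R ^ κ ≤ σ / |((b - a : ℤ) : ℝ)| ^ κ := by gcongr
    refine le_trans (le_of_eq ?_) h4
    rw [hβ0, neg_sub, Real.exp_sub, Real.exp_log hσ, mul_comm, Real.exp_mul, Real.exp_log (by linarith), Real.rpow_natCast]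
  have hden : ∀ a ∈ A, Real.exp (-(2 * e * (k + 1) + 4 * C3 + 2 * β0 + β1 + β2)) ≤
      ∏ b ∈ A.erase a, (sn (-(a * α) + b * α) * sn ((2 * θ + (a + k - 1) * α) + b * α)) := by
    intro a ha
    rw [Finset.prod_mul_distrib, hA, prod_two hdis, prod_two hdis]
    have p1 := hT3 (-(a * α)) a1 N1 a β0 hβ00 (fun b hb => by
      rw [Finset.mem_erase] at hb; exact hsd a ha b (Finset.mem_union_left _ hb.2) hb.1)
    have p2 := hT3 (-(a * α)) a2 N2 a β0 hβ00 (fun b hb => by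
      rw [Finset.mem_erase] at hb; exact hsd a ha b (Finset.mem_union_right _ hb.2) hb.1)
    have p3 := hT3 (2 * θ + (a + k - 1) * α) a1 N1 a β1 hβ1 (fun b hb => by
      rw [Finset.mem_erase] at hb
      have := hs1 a ha b hb.2 hb.1
      rw [show (2 * θ + (a + k - 1) * α) + b * α = 2 * θ + ((a + b + k - 1 : ℤ) : ℝ) * α by push_cast; ring]
      exact this)
    have p4 := hT3 (2 * θ + (a + k - 1) * α) a2 N2 a β2 hβ2 (fun b hb => by
      rw [Finset.mem_erase] at hb
      have := hs2 a ha b hb.2 hb.1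
      rw [show (2 * θ + (a + k - 1) * α) + b * α = 2 * θ + ((a + b + k - 1 : ℤ) : ℝ) * α by push_cast; ring]
      exact this)
    have nn : ∀ (S : Finset ℤ) (u : ℝ), 0 ≤ ∏ b ∈ S, sn (u + b * α) := fun S u => Finset.prod_nonneg fun b _ => sn_nonneg _
    calc Real.exp (-(2 * e * (k + 1) + 4 * C3 + 2 * β0 + β1 + β2))
        = Real.exp (-(e * N1 + C3 + β0)) * Real.exp (-(e * N2 + C3 + β0)) * (Real.exp (-(e * N1 + C3 + β1)) * Real.exp (-(e * N2 + C3 + β2))) := by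
          rw [← Real.exp_add, ← Real.exp_add, ← Real.exp_add, ← hNr]; congr 1; ring
      _ ≤ _ := by gcongr <;> first | exact nn _ _ | exact mul_nonneg (nn _ _) (nn _ _)
  have hnum : ∀ (s : ℝ) (a : ℤ), ∏ b ∈ A.erase a, (sn ((θ + (k - 1) / 2 * α - s) + b * α) * sn ((θ + (k - 1) / 2 * α + s) + b * α)) ≤
      Real.exp (2 * e * (k + 1) + 4 * C2) := by
    intro s a
    rw [Finset.prod_mul_distrib, hA, prod_two hdis, prod_two hdis]
    have p1 := hT2 (θ + (k - 1) / 2 * α - s) a1 N1 a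
    have p2 := hT2 (θ + (k - 1) / 2 * α - s) a2 N2 a
    have p3 := hT2 (θ + (k - 1) / 2 * α + s) a1 N1 a
    have p4 := hT2 (θ + (k - 1) / 2 * α + s) a2 N2 a
    have nn : ∀ (S : Finset ℤ) (u : ℝ), 0 ≤ ∏ b ∈ S, sn (u + b * α) := fun S u => Finset.prod_nonneg fun b _ => sn_nonneg _
    calc _ ≤ Real.exp (e * N1 + C2) * Real.exp (e * N2 + C2) * (Real.exp (e * N1 + C2) * Real.exp (e * N2 + C2)) := by
          gcongr <;> first | exact nn _ _ | exact mul_nonneg (nn _ _) (nn _ _)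
      _ = _ := by
          rw [← Real.exp_add, ← Real.exp_add, ← hNr]; congr 1; ring
  have hxd : ∀ a b : ℤ, |x a - x b| = sn (-(a * α) + b * α) * sn ((2 * θ + (a + k - 1) * α) + b * α) / 2 := by
    intro a b
    rw [hx, cos_diff, htt, ← sn_neg]
    congr 3 <;> ring
  have hinj : Set.InjOn x (A : Set ℤ) := by
    intro a ha b hb hab
    by_contra hne
    have hpos := lt_of_lt_of_le (Real.exp_pos _) (hden a ha)
    have hz := hxd a b
    rw [hab, sub_self, abs_zero] at hz
    have : ∏ b ∈ A.erase a, (sn (-(a * α) + b * α) * sn ((2 * θ + (a + k - 1) * α) + b * α)) = 0 :=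
      Finset.prod_eq_zero (Finset.mem_erase.mpr ⟨Ne.symm hne, hb⟩) (by linarith)
    linarith
  have hL := Lagrange.eq_interpolate (s := A) (v := x) (f := Q) hinj (by
    rw [hAc]; exact lt_of_le_of_lt hQd (by exact_mod_cast Nat.lt_succ_self k))
  apply ciSup_le
  intro t
  have hut : U lam α E k t = Q.eval (Real.cos (2 * π * (t + (k - 1) / 2 * α))) := by
    rw [← hQ]; congr 1; ring
  set s := t + (k - 1) / 2 * α with hs
  have hXd : ∀ b : ℤ, |Real.cos (2 * π * s) - x b| = sn ((θ + (k - 1) / 2 * α - s) + b * α) * sn ((θ + (k - 1) / 2 * α + s) + b * α) / 2 := by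
    intro b
    rw [hx, cos_diff, htt, ← sn_neg]
    congr 3 <;> ring
  have hbasis : ∀ a ∈ A, |(Lagrange.basis A x a).eval (Real.cos (2 * π * s))| ≤
      Real.exp (4 * e * (k + 1) + 4 * C2 + 4 * C3 + 2 * β0 + β1 + β2) := by
    intro a ha
    have hpos := lt_of_lt_of_le (Real.exp_pos _) (hden a ha)
    have h1 : |(Lagrange.basis A x a).eval (Real.cos (2 * π * s))| =
        (∏ b ∈ A.erase a, (sn ((θ + (k - 1) / 2 * α - s) + b * α) * sn ((θ + (k - 1) / 2 * α + s) + b * α))) /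
        ∏ b ∈ A.erase a, (sn (-(a * α) + b * α) * sn ((2 * θ + (a + k - 1) * α) + b * α)) := by
      unfold Lagrange.basis Lagrange.basisDivisor
      rw [Polynomial.eval_prod, Finset.abs_prod, ← Finset.prod_div_distrib]
      apply Finset.prod_congr rfl
      intro b _
      rw [Polynomial.eval_mul, Polynomial.eval_C, Polynomial.eval_sub, Polynomial.eval_X, Polynomial.eval_C,
        abs_mul, abs_inv, hXd, hxd]
      rw [inv_div, div_mul_div_comm, mul_comm 2, mul_div_mul_right _ _ two_ne_zero]
    rw [h1, div_le_iff₀ hpos]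
    refine (hnum s a).trans ?_
    refine le_trans (le_of_eq ?_) (mul_le_mul_of_nonneg_left (hden a ha) (Real.exp_pos _).le)
    rw [← Real.exp_add]; congr 1; ring
  have hsum : |U lam α E k t| ≤ (k + 1) * (w * Real.exp (4 * e * (k + 1) + 4 * C2 + 4 * C3 + 2 * β0 + β1 + β2)) := by
    rw [hut, hL, Lagrange.interpolate_apply, Polynomial.eval_finsetSum]
    refine (Finset.abs_sum_le_sum_abs _ _).trans ?_
    refine (Finset.sum_le_card_nsmul A _ (w * Real.exp (4 * e * (k + 1) + 4 * C2 + 4 * C3 + 2 * β0 + β1 + β2)) ?_).trans ?_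
    · intro a ha
      rw [Polynomial.eval_mul, Polynomial.eval_C, abs_mul, hQx]
      exact mul_le_mul (hmax a ha) (hbasis a ha) (abs_nonneg _) hw0
    · rw [hAc, nsmul_eq_mul]; push_cast; exact le_rfl
  refine hsum.trans ?_
  have hk1 : (k:ℝ) + 1 ≤ Real.exp (e * (k + 1) + |Real.log e|) := by
    have h1 := Real.add_one_le_exp (e * (k + 1))
    have h2 : 1 / e ≤ Real.exp |Real.log e| := by
      rw [one_div, ← Real.exp_log (inv_pos.mpr he0), Real.log_inv]
      exact Real.exp_le_exp.mpr (neg_le_abs _)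
    rw [Real.exp_add]
    calc (k:ℝ) + 1 = (e * (k + 1)) * (1 / e) := by field_simp
      _ ≤ _ := by gcongr; linarith
  calc _ ≤ Real.exp (e * (k + 1) + |Real.log e|) * (w * Real.exp (4 * e * (k + 1) + 4 * C2 + 4 * C3 + 2 * β0 + β1 + β2)) := by gcongr
    _ = w * (Real.exp (e * (k + 1) + |Real.log e|) * Real.exp (4 * e * (k + 1) + 4 * C2 + 4 * C3 + 2 * β0 + β1 + β2)) := by ring
    _ = w * Real.exp (ε * k + (ε + 4 * C2 + 4 * C3 - 2 * Real.log σ + |Real.log e|) + 2 * κ * Real.log R + β1 + β2) := by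
      rw [← Real.exp_add, hβ0, show ε = 5 * e by rw [he]; ring]; congr 2; ring
    _ ≤ _ := le_rfl

def IP (α : ℝ) (κ : ℕ) (ε C : ℝ) : Prop :=
  ∀ (lam E θ : ℝ) (k : ℕ) (a1 a2 : ℤ) (N1 N2 : ℕ) (R β1 β2 : ℝ),
      N1 + N2 = k + 1 → Disjoint (blk a1 N1) (blk a2 N2) → 1 ≤ R → 0 ≤ β1 → 0 ≤ β2 →
      (∀ a ∈ blk a1 N1 ∪ blk a2 N2, ∀ b ∈ blk a1 N1 ∪ blk a2 N2, |((a - b : ℤ) : ℝ)| ≤ R) →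
      (∀ a ∈ blk a1 N1 ∪ blk a2 N2, ∀ b ∈ blk a1 N1, b ≠ a → Real.exp (-β1) ≤ sn (2 * θ + ((a + b + k - 1 : ℤ) : ℝ) * α)) →
      (∀ a ∈ blk a1 N1 ∪ blk a2 N2, ∀ b ∈ blk a2 N2, b ≠ a → Real.exp (-β2) ≤ sn (2 * θ + ((a + b + k - 1 : ℤ) : ℝ) * α)) →
      ∃ a ∈ blk a1 N1 ∪ blk a2 N2, MU lam α E k ≤ |U lam α E k (θ + a * α)| *
        Real.exp (ε * k + C + 2 * κ * Real.log R + β1 + β2)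

def pl (σ : ℝ) (κ : ℕ) (R : ℝ) : ℝ := κ * Real.log (2 * R) + Real.log (2 / σ)

lemma pl_nonneg {σ : ℝ} (hσ : 0 < σ) (hσ1 : σ ≤ 1) (κ : ℕ) {R : ℝ} (hR : 1 ≤ R) : 0 ≤ pl σ κ R := by
  have h1 : 0 ≤ Real.log (2 * R) := Real.log_nonneg (by linarith)
  have h2 : 0 ≤ Real.log (2 / σ) := Real.log_nonneg (by rw [le_div_iff₀ hσ]; linarith)
  unfold pl; positivity

lemma minimizer {α σ : ℝ} {κ : ℕ} (hD : Dio α σ κ) (θ : ℝ) (R : ℕ) (hR : 1 ≤ R) :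
    ∃ n0 : ℤ, |n0| ≤ R ∧ ∀ n : ℤ, |n| ≤ R → n ≠ n0 → Real.exp (-(pl σ κ R)) ≤ sn (2 * θ + n * α) := by
  obtain ⟨n0, hn0, hmin⟩ := Finset.exists_min_image (Finset.Icc (-(R:ℤ)) R) (fun n : ℤ => sn (2 * θ + n * α))
    ⟨0, by simp⟩
  rw [Finset.mem_Icc] at hn0
  refine ⟨n0, abs_le.mpr hn0, fun n hn hne => ?_⟩
  rw [abs_le] at hn
  have h1 := hmin n (by rw [Finset.mem_Icc]; exact hn)
  have h2 := hD.2.2 (n - n0) (sub_ne_zero.mpr hne)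
  have h3 : sn (((n - n0 : ℤ) : ℝ) * α) ≤ sn (2 * θ + n * α) + sn (2 * θ + n0 * α) := by
    rw [show ((n - n0 : ℤ) : ℝ) * α = (2 * θ + n * α) - (2 * θ + n0 * α) by push_cast; ring]
    exact sn_sub_le _ _
  have hσ := hD.1
  have hRr : (1:ℝ) ≤ R := by exact_mod_cast hR
  have h4 : |((n - n0 : ℤ) : ℝ)| ≤ 2 * R := by
    have : |n - n0| ≤ 2 * R := by rw [abs_le]; omega
    exact_mod_cast this
  have h5 : 0 < |((n - n0 : ℤ) : ℝ)| := by rw [abs_pos]; exact_mod_cast sub_ne_zero.mpr hne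
  have h6 : σ / (2 * R) ^ κ ≤ σ / |((n - n0 : ℤ) : ℝ)| ^ κ := by gcongr
  have h7 : Real.exp (-(pl σ κ R)) = σ / (2 * R) ^ κ / 2 := by
    unfold pl
    rw [neg_add, Real.exp_add, Real.exp_neg, Real.exp_neg, Real.exp_log (by positivity), mul_comm (κ:ℝ), Real.exp_mul, Real.exp_log (by positivity), Real.rpow_natCast]
    field_simp
  rw [h7]; linarith

lemma stage1_core {lam α σ θ E ε C β R : ℝ} {κ : ℕ} (hI : IP α κ ε C) {k q : ℕ} (hq : 1 ≤ q) (hqk : 8 * q ≤ k)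
    (hβ : 0 ≤ β) {n0 u v : ℤ} {Y : ℕ} (hR : 4 * (Y:ℝ) + 4 * k ≤ R)
    (hn0 : ∀ n : ℤ, |(n : ℝ)| ≤ R → n ≠ n0 → Real.exp (-β) ≤ sn (2 * θ + n * α))
    (hu : |u| ≤ Y) (hv : |v| ≤ Y) (huv : (k:ℤ) < |u - v|) (huv2 : (k:ℤ) < |u + v - n0|) (hu2 : (k:ℤ) < |2 * u - n0|) :
    ∃ p a : ℤ, (p = u ∨ p = v) ∧ a + q ≤ p ∧ p ≤ a + k - q ∧
      MU lam α E k ≤ |U lam α E k (θ + a * α)| * Real.exp (ε * k + C + 2 * κ * Real.log R + β + β) := by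
  rw [abs_le] at hu hv
  rw [lt_abs] at huv huv2 hu2
  have hcast : ∀ n : ℤ, |n| ≤ 4 * Y + 4 * k → |(n:ℝ)| ≤ R := by
    intro n hn
    refine le_trans ?_ hR
    exact_mod_cast hn
  have hR1 : 1 ≤ R := by
    have := hcast 1 (by simp; omega)
    simpa using this
  -- choose v block
  obtain ⟨b, hb1, hb2, hb3⟩ : ∃ b : ℤ, v - k + q ≤ b ∧ b + 2 * q ≤ v - q + 1 ∧
      (n0 < 2 * b + k - 1 ∨ 2 * b + 4 * q - 2 + k - 1 < n0) := by
    by_cases h : n0 < 2 * (v - 3 * q + 1) + k - 1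
    · exact ⟨v - 3 * q + 1, by omega, by omega, Or.inl h⟩
    · exact ⟨v - k + q, by omega, by omega, Or.inr (by omega)⟩
  have hdis : Disjoint (blk (u - k + q) (k - 2 * q + 1)) (blk b (2 * q)) := by
    rw [Finset.disjoint_left]; intro c; rw [mem_blk, mem_blk]; push_cast [show 2 * q ≤ k by omega]; omega
  have hmem : ∀ a ∈ blk (u - k + q) (k - 2 * q + 1) ∪ blk b (2 * q), (u - k + q ≤ a ∧ a ≤ u - q) ∨ (b ≤ a ∧ a < b + 2 * q) := by
    intro a ha
    rw [Finset.mem_union, mem_blk, mem_blk] at ha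
    push_cast [show 2 * q ≤ k by omega] at ha
    omega
  obtain ⟨a, ha, haU⟩ := hI lam E θ k (u - k + q) b (k - 2 * q + 1) (2 * q) R β β (by omega) hdis hR1 hβ hβ
    (by
      intro a ha c hc
      apply hcast
      have := hmem a ha; have := hmem c hc
      rw [abs_le]; omega)
    (by
      intro a ha c hc hne
      have h1 := hmem a ha; have h2 := hmem c (Finset.mem_union_left _ hc)
      rw [mem_blk] at hc
      push_cast [show 2 * q ≤ k by omega] at hc
      apply hn0
      · apply hcast; rw [abs_le]; omega
      · omega)
    (by
      intro a ha c hc hne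
      have h1 := hmem a ha; have h2 := hmem c (Finset.mem_union_right _ hc)
      rw [mem_blk] at hc
      push_cast at hc
      apply hn0
      · apply hcast; rw [abs_le]; omega
      · omega)
  rcases hmem a ha with h | h
  · exact ⟨u, a, Or.inl rfl, by omega, by omega, haU⟩
  · exact ⟨v, a, Or.inr rfl, by omega, by omega, haU⟩

/-- data for one eigenfunction, normalized -/
def Nrm (lam α θ E : ℝ) (φ : ℤ → ℝ) (m : ℤ) : Prop :=
  IsEigenfunction (amoPot lam α θ) E φ ∧ |φ m| = 1 ∧ ∀ n, |φ n| ≤ 1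

lemma stage1_reg {lam α σ θ E ε C β R μ ε1 : ℝ} {κ : ℕ} (hl : 0 < lam) (hI : IP α κ ε C) {k q : ℕ} (hq : 1 ≤ q) (hqk : 8 * q ≤ k)
    (hk : ∀ j ≤ k, MU lam α E j ≤ MU lam α E k * Real.exp (-μ * (k - j)))
    (hβ : 0 ≤ β) {n0 m y : ℤ} {Y : ℕ} (hR : 4 * (Y:ℝ) + 4 * k ≤ R)
    (hn0 : ∀ n : ℤ, |(n : ℝ)| ≤ R → n ≠ n0 → Real.exp (-β) ≤ sn (2 * θ + n * α))
    {φ : ℤ → ℝ} (hφ : Nrm lam α θ E φ m)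
    (hε1 : 0 ≤ ε1) (hμ : ε1 ≤ μ) (hΛ : ε * k + C + 2 * κ * Real.log R + β + β + Real.log 3 ≤ ε1 * q)
    (hu : |m| ≤ Y) (hv : |y| ≤ Y) (huv : (k:ℤ) < |y - m|) (huv2 : (k:ℤ) < |y + m - n0|) :
    ∃ d1 d2 : ℤ, 0 < d1 ∧ 0 < d2 ∧ |φ y| ≤ (Real.exp (-(μ - ε1) * d1) * |φ (y - d1)| + Real.exp (-(μ - ε1) * d2) * |φ (y + d2)|) / 3 := by
  have hwin : ∀ p a : ℤ, a + q ≤ p → p ≤ a + k - q → MU lam α E k ≤ |U lam α E k (θ + a * α)| * Real.exp (ε * k + C + 2 * κ * Real.log R + β + β) →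
      ∃ d1 d2 : ℤ, 0 < d1 ∧ 0 < d2 ∧ |φ p| ≤ (Real.exp (-(μ - ε1) * d1) * |φ (p - d1)| + Real.exp (-(μ - ε1) * d2) * |φ (p + d2)|) / 3 := by
    intro p a h1 h2 hU
    have hw := winBound hl hφ.1 hk (p := p) hU (by omega) (by omega)
    refine ⟨p - a + 1, a + k - p, by omega, by omega, hw.trans ?_⟩
    rw [show p - (p - a + 1) = a - 1 by ring, show p + (a + k - p) = a + k by ring]
    have hd : ∀ d : ℤ, (q:ℤ) ≤ d → Real.exp (ε * k + C + 2 * κ * Real.log R + β + β) * Real.exp (-μ * d) ≤ Real.exp (-(μ - ε1) * d) / 3 := by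
      intro d hd
      have hd' : (q:ℝ) ≤ d := by exact_mod_cast hd
      rw [le_div_iff₀ (by norm_num), ← Real.exp_log (show (0:ℝ) < 3 by norm_num), ← Real.exp_add, ← Real.exp_add]
      apply Real.exp_le_exp.mpr
      nlinarith
    have e1 := mul_le_mul_of_nonneg_right (hd (p - a + 1) (by omega)) (abs_nonneg (φ (a - 1)))
    have e2 := mul_le_mul_of_nonneg_right (hd (a + k - p) (by omega)) (abs_nonneg (φ (a + k)))
    linarith
  have hmain : ∃ p a : ℤ, (p = y ∨ p = m) ∧ a + q ≤ p ∧ p ≤ a + k - q ∧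
      MU lam α E k ≤ |U lam α E k (θ + a * α)| * Real.exp (ε * k + C + 2 * κ * Real.log R + β + β) := by
    by_cases h : (k:ℤ) < |2 * y - n0|
    · exact stage1_core (σ := σ) hI hq hqk hβ hR hn0 hv hu huv huv2 h
    · have h' : (k:ℤ) < |2 * m - n0| := by
        rw [lt_abs] at huv huv2 h ⊢; omega
      obtain ⟨p, a, hp, h2⟩ := stage1_core (σ := σ) (lam := lam) (E := E) hI hq hqk hβ hR hn0 hu hv (by rwa [abs_sub_comm]) (by rwa [add_comm m y]) h'
      exact ⟨p, a, hp.symm, h2⟩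
  obtain ⟨p, a, hp, h1, h2, h3⟩ := hmain
  rcases hp with rfl | rfl
  · exact hwin p a h1 h2 h3
  · exfalso
    obtain ⟨d1, d2, hd1, hd2, hb⟩ := hwin p a h1 h2 h3
    rw [hφ.2.1] at hb
    have hle : ∀ d : ℤ, 0 < d → Real.exp (-(μ - ε1) * d) ≤ 1 := by
      intro d hd
      have : (0:ℝ) < d := by exact_mod_cast hd
      apply Real.exp_le_one_iff.mpr; nlinarith
    have e1 := mul_le_mul (hle d1 hd1) (hφ.2.2 (p - d1)) (abs_nonneg _) zero_le_one
    have e2 := mul_le_mul (hle d2 hd2) (hφ.2.2 (p + d2)) (abs_nonneg _) zero_le_one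
    linarith

/-- maximum principle -/
lemma maxPrinciple {ν : ℝ} (hν : 0 ≤ ν) {φ : ℤ → ℝ} (hφ : ∀ n, |φ n| ≤ 1) (w : ℤ → ℤ) (Y : ℕ)
    (hw0 : ∀ n, 0 ≤ w n) (hwY : ∀ n : ℤ, (Y:ℤ) < |n| → w n = 0)
    (hwL : ∀ a b : ℤ, w a - w b ≤ |a - b|)
    (hreg : ∀ y : ℤ, |y| ≤ Y → 0 < w y → ∃ d1 d2 : ℤ, 0 < d1 ∧ 0 < d2 ∧
      |φ y| ≤ (Real.exp (-ν * d1) * |φ (y - d1)| + Real.exp (-ν * d2) * |φ (y + d2)|) / 3) (y : ℤ) :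
    |φ y| ≤ Real.exp (-ν * w y) := by
  set F : ℤ → ℝ := fun n => |φ n| * Real.exp (ν * w n) with hF
  have hfin : ∀ n, |φ n| = F n * Real.exp (-ν * w n) := by
    intro n
    simp only [hF]
    rw [mul_assoc, ← Real.exp_add]; simp
  suffices h : ∀ y, F y ≤ 1 by
    rw [hfin y]
    have := mul_le_mul_of_nonneg_right (h y) (Real.exp_pos (-ν * w y)).le
    linarith
  obtain ⟨z, hz, hmax⟩ := Finset.exists_max_image (Finset.Icc (-(Y:ℤ)) Y) F ⟨0, by simp⟩
  have hout : ∀ n, w n = 0 → F n ≤ 1 := by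
    intro n hn
    simp only [hF, hn]; simpa using hφ n
  by_contra hcon
  push Not at hcon
  obtain ⟨y, hy⟩ := hcon
  have hyY : |y| ≤ Y := by
    by_contra h
    push Not at h
    exact absurd (hout y (hwY y h)) (by linarith)
  have hzy := hmax y (by rw [Finset.mem_Icc]; exact abs_le.mp hyY)
  have hz1 : 1 < F z := by linarith
  have hall : ∀ n, F n ≤ F z := by
    intro n
    by_cases h : |n| ≤ Y
    · exact hmax n (by rw [Finset.mem_Icc]; exact abs_le.mp h)
    · push Not at h
      exact (hout n (hwY n h)).trans hz1.le
  have hwz : 0 < w z := by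
    rcases (hw0 z).lt_or_eq with h | h
    · exact h
    · exact absurd (hout z h.symm) (by linarith)
  rw [Finset.mem_Icc] at hz
  obtain ⟨d1, d2, hd1, hd2, hb⟩ := hreg z (abs_le.mpr hz) hwz
  have hterm : ∀ (d n : ℤ), |z - n| = d → Real.exp (-ν * d) * |φ n| ≤ F z * Real.exp (-ν * w z) := by
    intro d n hd
    have h1 := hwL z n
    rw [hd] at h1
    have h1' : (w z : ℝ) - w n ≤ d := by exact_mod_cast h1
    rw [hfin n]
    calc Real.exp (-ν * d) * (F n * Real.exp (-ν * w n)) = F n * Real.exp (-ν * d + -ν * w n) := by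
          rw [Real.exp_add]; ring
      _ ≤ F z * Real.exp (-ν * w z) := by
          have := hall n
          gcongr
          nlinarith
  have t1 := hterm d1 (z - d1) (by rw [sub_sub_cancel, abs_of_pos hd1])
  have t2 := hterm d2 (z + d2) (by rw [sub_add_cancel_left, abs_neg, abs_of_pos hd2])
  rw [hfin z] at hb
  have hp : 0 < F z * Real.exp (-ν * w z) := by positivity
  linarith

lemma stage1 {lam α σ θ E ε C β R μ ε1 : ℝ} {κ : ℕ} (hl : 0 < lam) (hI : IP α κ ε C) {k q : ℕ} (hq : 1 ≤ q) (hqk : 8 * q ≤ k)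
    (hk : ∀ j ≤ k, MU lam α E j ≤ MU lam α E k * Real.exp (-μ * (k - j)))
    (hβ : 0 ≤ β) {n0 m : ℤ} {Y : ℕ} (hR : 4 * (Y:ℝ) + 4 * k ≤ R)
    (hn0 : ∀ n : ℤ, |(n : ℝ)| ≤ R → n ≠ n0 → Real.exp (-β) ≤ sn (2 * θ + n * α))
    {φ : ℤ → ℝ} (hφ : Nrm lam α θ E φ m)
    (hε1 : 0 ≤ ε1) (hμ : ε1 ≤ μ) (hΛ : ε * k + C + 2 * κ * Real.log R + β + β + Real.log 3 ≤ ε1 * q)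
    (hu : |m| ≤ Y) (y : ℤ) :
    |φ y| ≤ Real.exp (-(μ - ε1) * ((min (min (|y - m| - k) (|y + m - n0| - k)) (Y - |y|) : ℤ) : ℝ)) := by
  set w : ℤ → ℤ := fun y => max 0 (min (min (|y - m| - k) (|y + m - n0| - k)) (Y - |y|)) with hw
  have key := maxPrinciple (ν := μ - ε1) (by linarith) hφ.2.2 w Y (fun n => le_max_left _ _)
    (by
      intro n hn
      simp only [hw]; omega)
    (by
      intro a b
      have e1 : |a - m| ≤ |a - b| + |b - m| := abs_sub_le _ _ _
      have e2 : |a + m - n0| ≤ |a - b| + |b + m - n0| := by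
        have := abs_add_le (a - b) (b + m - n0)
        rwa [show a - b + (b + m - n0) = a + m - n0 by ring] at this
      have e3 : |b| ≤ |a - b| + |a| := by
        have := abs_sub_le b a 0
        rw [abs_sub_comm b a] at this; simpa using this
      have e4 : 0 ≤ |a - b| := abs_nonneg _
      simp only [hw]
      generalize |a - b| = x0 at *
      generalize |a - m| = x1 at *
      generalize |b - m| = x2 at *
      generalize |a + m - n0| = x3 at *
      generalize |b + m - n0| = x4 at *
      generalize |a| = x5 at *
      generalize |b| = x6 at *
      omega)
    (by
      intro y hy hwy
      simp only [hw] at hwy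
      exact stage1_reg (σ := σ) hl hI hq hqk hk hβ hR hn0 hφ hε1 hμ hΛ hu hy (by omega) (by omega)) y
  refine key.trans (Real.exp_le_exp.mpr ?_)
  have : (((min (min (|y - m| - k) (|y + m - n0| - k)) (Y - |y|) : ℤ)) : ℝ) ≤ (w y : ℝ) := by
    exact_mod_cast le_max_right _ _
  nlinarith

/-- tunnelling -/
lemma stage2 {lam α θ E ε C β R μ A : ℝ} {κ : ℕ} (hl : 0 < lam) (hI : IP α κ ε C) {k L : ℕ} (hL : 1 ≤ L) (hLk : 8 * L ≤ k)
    (hk : ∀ j ≤ k, MU lam α E j ≤ MU lam α E k * Real.exp (-μ * (k - j)))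
    (hβ : 0 ≤ β) {m y : ℤ} (hR : 4 * (L:ℝ) + 4 * k ≤ R)
    (hn : ∀ n : ℤ, |(n : ℝ)| ≤ R → Real.exp (-β) ≤ sn (2 * θ + n * α))
    {φ : ℤ → ℝ} (hφ : Nrm lam α θ E φ m) (hμ : 0 ≤ μ) (hA : 0 ≤ A)
    (hu : |m| ≤ L) (hv : |y| ≤ L) (hmy : m ≠ y)
    (hdec : ∀ z : ℤ, min m y ≤ z → z ≤ max m y → |φ z| ≤ Real.exp (-μ * ((min |z - m| |z - y| : ℤ) : ℝ) + A)) :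
    |φ y| ≤ 2 * Real.exp (-μ * ((|y - m| : ℤ) : ℝ) + A + (ε * k + C + 2 * κ * Real.log R + β)) := by
  set p := min m y with hp
  set p' := max m y with hp'
  set h := (p + p') / 2 with hh
  have hpp : p < p' := by omega
  have hD : |y - m| = p' - p := by rw [abs_eq_max_neg]; omega
  rw [abs_le] at hu hv
  have hcast : ∀ n : ℤ, |n| ≤ 4 * L + 4 * k → |(n:ℝ)| ≤ R := by
    intro n hn
    refine le_trans ?_ hR
    exact_mod_cast hn
  have hR1 : 1 ≤ R := by
    have := hcast 1 (by simp; omega)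
    simpa using this
  have hmem : ∀ a ∈ blk (h - k + 1) (k + 1) ∪ blk 0 0, h - k + 1 ≤ a ∧ a ≤ h + 1 := by
    intro a ha
    rw [Finset.mem_union, mem_blk, mem_blk] at ha
    push_cast at ha
    omega
  obtain ⟨a, ha, haU⟩ := hI lam E θ k (h - k + 1) 0 (k + 1) 0 R β 0 (by omega) (by simp [blk]) hR1 hβ le_rfl
    (by
      intro a ha c hc
      apply hcast
      have := hmem a ha; have := hmem c hc
      rw [abs_le]; omega)
    (by
      intro a ha c hc hne
      have h1 := hmem a ha; have h2 := hmem c (Finset.mem_union_left _ hc)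
      apply hn
      apply hcast; rw [abs_le]; omega)
    (by
      intro a ha c hc hne
      rw [mem_blk] at hc; omega)
  rw [add_zero] at haU
  set Λ := ε * k + C + 2 * κ * Real.log R + β with hΛ
  have hab := hmem a ha
  have hφm : |φ y| ≤ |φ m| := by rw [hφ.2.1]; exact hφ.2.2 y
  have hyp : |φ y| ≤ |φ p| ∧ |φ y| ≤ |φ p'| := by
    rcases le_total m y with hle | hle
    · rw [hp, hp', min_eq_left hle, max_eq_right hle]; exact ⟨hφm, le_rfl⟩
    · rw [hp, hp', min_eq_right hle, max_eq_left hle]; exact ⟨le_rfl, hφm⟩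
  -- each term
  have hterm : ∀ (d z : ℤ), (p' - p ≤ d ∨ (p ≤ z ∧ z ≤ p' ∧ p' - p ≤ d + min |z - m| |z - y|)) → 
      Real.exp (-μ * (d : ℝ)) * |φ z| ≤ Real.exp (-μ * ((|y - m| : ℤ) : ℝ) + A) := by
    intro d z hdz
    rw [hD]
    rcases hdz with h1 | ⟨h1, h2, h3⟩
    · have h1' : ((p' - p : ℤ) : ℝ) ≤ d := by exact_mod_cast h1
      calc Real.exp (-μ * (d : ℝ)) * |φ z| ≤ Real.exp (-μ * (d : ℝ)) * 1 := by gcongr; exact hφ.2.2 z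
        _ ≤ _ := by rw [mul_one]; apply Real.exp_le_exp.mpr; nlinarith
    · have h3' : ((p' - p : ℤ) : ℝ) ≤ d + ((min |z - m| |z - y| : ℤ) : ℝ) := by exact_mod_cast h3
      calc Real.exp (-μ * (d : ℝ)) * |φ z| ≤ Real.exp (-μ * (d : ℝ)) * Real.exp (-μ * ((min |z - m| |z - y| : ℤ) : ℝ) + A) := by
            gcongr; exact hdec z h1 h2
        _ ≤ _ := by rw [← Real.exp_add]; apply Real.exp_le_exp.mpr; nlinarith
  have hfinal : ∀ t : ℤ, |φ y| ≤ |φ t| → a ≤ t → t < a + k → 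
      (p' - p ≤ t - a + 1 ∨ (p ≤ a - 1 ∧ a - 1 ≤ p' ∧ p' - p ≤ t - a + 1 + min |a - 1 - m| |a - 1 - y|)) →
      (p' - p ≤ a + k - t ∨ (p ≤ a + k ∧ a + k ≤ p' ∧ p' - p ≤ a + k - t + min |a + k - m| |a + k - y|)) →
      |φ y| ≤ 2 * Real.exp (-μ * ((|y - m| : ℤ) : ℝ) + A + Λ) := by
    intro t ht h1 h2 c1 c2
    have hw := winBound hl hφ.1 hk (p := t) haU h1 h2
    have t1 := hterm _ _ c1
    have t2 := hterm _ _ c2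
    rw [Real.exp_add _ Λ]
    calc |φ y| ≤ |φ t| := ht
      _ ≤ _ := hw
      _ ≤ Real.exp Λ * (Real.exp (-μ * ((|y - m| : ℤ) : ℝ) + A) + Real.exp (-μ * ((|y - m| : ℤ) : ℝ) + A)) := by gcongr
      _ = _ := by ring
  by_cases hcase : 2 * (a - 1) ≤ 2 * h - k
  · refine hfinal p hyp.1 (by omega) (by omega) (Or.inl (by omega)) ?_
    by_cases hz : a + k ≤ p'
    · right; simp only [abs_eq_max_neg]; omega
    · left; omega
  · refine hfinal p' hyp.2 (by omega) (by omega) ?_ (Or.inl (by omega))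
    by_cases hz : p ≤ a - 1
    · right; simp only [abs_eq_max_neg]; omega
    · left; omega

lemma log_small (A B : ℝ) {c : ℝ} (hc : 0 < c) : ∃ L0 : ℕ, ∀ L : ℕ, L0 ≤ L → A + B * Real.log L ≤ c * L := by
  have h1 : Tendsto (fun x : ℝ => Real.log x / x) atTop (nhds 0) := by
    have := Real.isLittleO_log_id_atTop.tendsto_div_nhds_zero
    simpa using this
  have h2 : Tendsto (fun x : ℝ => A / x) atTop (nhds 0) := tendsto_const_nhds.div_atTop tendsto_id
  have h3 : Tendsto (fun x : ℝ => A / x + B * (Real.log x / x)) atTop (nhds 0) := by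
    simpa using h2.add (h1.const_mul B)
  have h4 := (h3.comp tendsto_natCast_atTop_atTop).eventually (gt_mem_nhds hc)
  obtain ⟨L0, hL0⟩ := (h4.and (eventually_ge_atTop 1)).exists_forall_of_atTop
  refine ⟨L0, fun L hL => ?_⟩
  obtain ⟨h5, h6⟩ := hL0 L hL
  have hLp : (0:ℝ) < L := by exact_mod_cast h6
  simp only [Function.comp] at h5
  have : A + B * Real.log L = (A / L + B * (Real.log L / L)) * L := by field_simp
  rw [this]
  gcongr

lemma E_bound {lam α θ E : ℝ} (hl : 0 ≤ lam) {φ : ℤ → ℝ} {m : ℤ} (h : Nrm lam α θ E φ m) : |E| ≤ 2 + 2 * lam := by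
  have h1 := h.1 m
  have h2 : |E| = |E * φ m| := by rw [abs_mul, h.2.1, mul_one]
  rw [h2, ← h1]
  refine (abs_add_le _ _).trans ?_
  have a1 := abs_add_le (φ (m + 1)) (φ (m - 1))
  have a2 := h.2.2 (m + 1)
  have a3 := h.2.2 (m - 1)
  rw [abs_mul, h.2.1, mul_one]
  have a4 : |amoPot lam α θ m| ≤ 2 * lam := vp_abs hl (θ + m * α)
  linarith

set_option maxHeartbeats 2000000 in
lemma propD {lam α σ : ℝ} {κ : ℕ} (hlam : 1 < lam) (hD : Dio α σ κ) (θ : ℝ) {ε : ℝ} (hε : 0 < ε) :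
    ∃ L0 : ℕ, ∀ L : ℕ, L0 ≤ L → ∃ n0 : ℤ, ∀ (E : ℝ) (φ : ℤ → ℝ) (m : ℤ), Nrm lam α θ E φ m → |m| ≤ L → ∀ y : ℤ, |y| ≤ L →
      |φ y| ≤ Real.exp (-Real.log lam * ((min |y - m| |y + m - n0| : ℤ) : ℝ) + ε * L) ∧
      ∀ β : ℝ, 0 ≤ β → Real.exp (-β) ≤ sn (2 * θ + n0 * α) →
        |φ y| ≤ Real.exp (-Real.log lam * ((|y - m| : ℤ) : ℝ) + Real.log lam * ((|y + m - n0| : ℤ) : ℝ) + β + ε * L) := by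
  set l := Real.log lam with hl
  have hl0 : 0 < l := Real.log_pos hlam
  have hlam0 : 0 < lam := by linarith
  set e := min ε l / 40 with he
  have he0 : 0 < e := by have := lt_min hε hl0; positivity
  have heε : 40 * e ≤ ε := by rw [he]; have := min_le_left ε l; linarith
  have hel : 40 * e ≤ l := by rw [he]; have := min_le_right ε l; linarith
  obtain ⟨G, hG1, hG⟩ := goodScale (lam := lam) (B := 4 * lam + 3) hlam (by linarith) he0
  have hGr : (1:ℝ) ≤ G := by exact_mod_cast hG1
  set e2 := min (e / 32) (e / (8 * G)) with he2
  have he20 : 0 < e2 := lt_min (by positivity) (by positivity)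
  obtain ⟨C, hC0, hI0⟩ := interp hD he20
  have hI : IP α κ e2 C := hI0
  set c := e / (G * l) with hc
  have hc0 : 0 < c := by positivity
  have hc1 : c ≤ 1 := by rw [hc, div_le_one (by positivity)]; nlinarith
  set Rn : ℕ := 12 + 32 * G with hRn
  have hRn0 : (0:ℝ) < Rn := by positivity
  obtain ⟨L1, hL1⟩ := log_small (C + 2 * κ * Real.log Rn + 2 * (κ * Real.log (2 * Rn) + Real.log (2 / σ)) + Real.log 3)
    (2 * κ + 2 * κ) (show 0 < e * c / 64 by positivity)
  obtain ⟨L2, hL2⟩ := exists_nat_ge (40 / c)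
  refine ⟨max (max L1 L2) 1, fun L hL => ?_⟩
  have hLL1 : L1 ≤ L := by omega
  have hLL2 : L2 ≤ L := by omega
  have hLone : 1 ≤ L := by omega
  have hLr : (1:ℝ) ≤ L := by exact_mod_cast hLone
  have hσ := hD.1
  have hR1 : 1 ≤ Rn * L := Nat.one_le_iff_ne_zero.mpr (by positivity)
  obtain ⟨n0, hn0R, hn0⟩ := minimizer hD θ (Rn * L) hR1
  set Rr : ℝ := ((Rn * L : ℕ) : ℝ) with hRr
  set β0 := pl σ κ Rr with hβ0
  have hRr1 : 1 ≤ Rr := by rw [hRr]; exact_mod_cast hR1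
  have hβ00 : 0 ≤ β0 := pl_nonneg hσ hD.2.1 κ hRr1
  have hlogR : 0 ≤ Real.log Rr := Real.log_nonneg hRr1
  have hl3 : 0 ≤ Real.log 3 := Real.log_nonneg (by norm_num)
  have hn0' : ∀ n : ℤ, |(n:ℝ)| ≤ Rr → n ≠ n0 → Real.exp (-β0) ≤ sn (2 * θ + n * α) := by
    intro n hn
    exact hn0 n (by rw [hRr] at hn; exact_mod_cast hn)
  have hP : C + 2 * κ * Real.log Rr + 2 * β0 + Real.log 3 ≤ e * c / 64 * L := by
    refine le_trans (le_of_eq ?_) (hL1 L hLL1)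
    rw [hβ0, pl, hRr]; push_cast
    rw [← mul_assoc 2 (Rn:ℝ) (L:ℝ), Real.log_mul (by positivity) (by positivity), Real.log_mul (x := 2 * (Rn:ℝ)) (by positivity) (by positivity)]
    ring
  have hcL : 40 ≤ c * L := by
    have : 40 / c ≤ L := hL2.trans (by exact_mod_cast hLL2)
    rw [div_le_iff₀ hc0] at this; linarith
  set K := ⌊c * L⌋₊ with hK
  have hK1 : (K:ℝ) ≤ c * L := Nat.floor_le (by positivity)
  have hK2 : c * L < K + 1 := Nat.lt_floor_add_one _
  have hKone : 32 ≤ K := by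
    have : (32:ℝ) ≤ K := by linarith
    exact_mod_cast this
  refine ⟨n0, fun E φ m hφ hm => ?_⟩
  have hEb : |E| + 2 * lam + 1 ≤ 4 * lam + 3 := by have := E_bound hlam0.le hφ; linarith
  obtain ⟨k, hkK, hkG, hk⟩ := hG α E hEb K (by omega)
  have hkK' : (K:ℝ) ≤ k := by exact_mod_cast hkK
  have hkG' : (k:ℝ) ≤ G * K := by exact_mod_cast hkG
  have hkl : l * k ≤ e * L := by
    calc l * k ≤ l * (G * (c * L)) := by gcongr; exact hkG'.trans (by gcongr)
      _ = e * L := by rw [hc]; field_simp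
  have hkL : (k:ℝ) ≤ L := by nlinarith
  have hkL' : k ≤ L := by exact_mod_cast hkL
  have part1 : ∀ y : ℤ, |y| ≤ L → |φ y| ≤ Real.exp (-l * ((min |y - m| |y + m - n0| : ℤ) : ℝ) + 5 * e * L) := by
    intro y hy
    have hq : (k:ℝ) / 16 ≤ ((k / 8 : ℕ) : ℝ) := by
      have : k ≤ 16 * (k / 8) := by omega
      have : (k:ℝ) ≤ 16 * ((k / 8 : ℕ) : ℝ) := by exact_mod_cast this
      linarith
    have hs := stage1 (σ := σ) (μ := l - e) (ε1 := e) (β := β0) (R := Rr) (Y := 3 * L) (n0 := n0) (k := k) (q := k / 8)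
      hlam0 hI (by omega) (by omega) hk hβ00 (by
        rw [hRr, hRn]; push_cast; nlinarith) hn0' hφ he0.le (by linarith) (by
        have h1 : e2 * k ≤ e / 32 * k := by gcongr; exact min_le_left _ _
        have h2 : e * (k / 16) ≤ e * ((k / 8 : ℕ) : ℝ) := by gcongr
        have h3 : c * L / 2 ≤ K := by linarith
        have h4 : e * (c * L / 2) ≤ e * k := by gcongr; linarith
        linarith) (by push_cast; omega) y
    refine hs.trans (Real.exp_le_exp.mpr ?_)
    have hmn : min |y - m| |y + m - n0| - k ≤ (min (min (|y - m| - k) (|y + m - n0| - k)) (((3 * L : ℕ) : ℤ) - |y|) : ℤ) := by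
      have : |y - m| ≤ |y| + |m| := abs_sub _ _
      push_cast; omega
    have hmn2 : min |y - m| |y + m - n0| ≤ 2 * L := by
      have : |y - m| ≤ |y| + |m| := abs_sub _ _
      omega
    have hmn' : ((min |y - m| |y + m - n0| : ℤ) : ℝ) - k ≤ ((min (min (|y - m| - k) (|y + m - n0| - k)) (((3 * L : ℕ) : ℤ) - |y|) : ℤ) : ℝ) := by
      exact_mod_cast hmn
    have hmn2' : ((min |y - m| |y + m - n0| : ℤ) : ℝ) ≤ 2 * L := by exact_mod_cast hmn2
    generalize ((min (min (|y - m| - k) (|y + m - n0| - k)) (((3 * L : ℕ) : ℤ) - |y|) : ℤ) : ℝ) = W at *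
    generalize ((min |y - m| |y + m - n0| : ℤ) : ℝ) = M at *
    have h1 : (l - e - e) * (M - k) ≤ (l - e - e) * W := by
      apply mul_le_mul_of_nonneg_left hmn'; linarith
    have h2 : e * M ≤ e * (2 * L) := by gcongr
    have h3 : 0 ≤ e * k := by positivity
    linarith
  intro y hy
  constructor
  · refine (part1 y hy).trans (Real.exp_le_exp.mpr ?_)
    have : 5 * e * L ≤ ε * L := by gcongr; linarith
    linarith
  · intro β hβ hsn
    by_cases hmy : m = y
    · refine (hφ.2.2 y).trans (Real.one_le_exp ?_)
      rw [hmy, sub_self, abs_zero]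
      have : (0:ℝ) ≤ ((|y + y - n0| : ℤ) : ℝ) := by exact_mod_cast abs_nonneg _
      have := mul_nonneg hl0.le this
      have : 0 ≤ ε * L := by positivity
      push_cast at *; linarith
    · obtain ⟨k2, hk2K, hk2G, hk2⟩ := hG α E hEb (8 * L) (by omega)
      have hk2G' : (k2:ℝ) ≤ G * (8 * L) := by exact_mod_cast hk2G
      set Δ : ℝ := ((|y + m - n0| : ℤ) : ℝ) with hΔ
      have hΔ0 : 0 ≤ Δ := by rw [hΔ]; exact_mod_cast abs_nonneg _
      have hs := stage2 (μ := l - e) (β := β0 + β) (R := Rr) (A := 5 * e * L + l * Δ) (k := k2) (L := L) (m := m) (y := y)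
        hlam0 hI hLone hk2K hk2 (by positivity) (by
          clear part1 hG hk2 hn0' hn0
          have hL0' : (0:ℝ) ≤ L := Nat.cast_nonneg L
          rw [hRr, hRn]; push_cast
          have e1 : (12 + 32 * (G:ℝ)) * L = 12 * L + 4 * (G * (8 * L)) := by ring
          rw [e1]; linarith only [hk2G', hL0']) (by
          intro n hn
          by_cases h : n = n0
          · rw [h]; refine le_trans (Real.exp_le_exp.mpr ?_) hsn; linarith
          · refine le_trans (Real.exp_le_exp.mpr ?_) (hn0' n hn h); linarith)
        hφ (by linarith) (by positivity) hm hy hmy (by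
          intro z hz1 hz2
          have hzL : |z| ≤ L := by
            clear part1
            have a1 := abs_le.mp hm; have a2 := abs_le.mp hy
            rw [abs_le]; constructor
            · exact (le_min a1.1 a2.1).trans hz1
            · exact hz2.trans (max_le a1.2 a2.2)
          refine (part1 z hzL).trans (Real.exp_le_exp.mpr ?_)
          have h1 : min |z - m| |z - y| ≤ min |z - m| |z + m - n0| + |y + m - n0| := by
            have a1 : |z - y| ≤ |z + m - n0| + |y + m - n0| := by
              have := abs_sub (z + m - n0) (y + m - n0)
              rwa [show z + m - n0 - (y + m - n0) = z - y by ring] at this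
            have a2 : 0 ≤ |y + m - n0| := abs_nonneg _
            omega
          have h1' : ((min |z - m| |z - y| : ℤ) : ℝ) ≤ ((min |z - m| |z + m - n0| : ℤ) : ℝ) + Δ := by
            rw [hΔ]; exact_mod_cast h1
          have h0 : 0 ≤ ((min |z - m| |z + m - n0| : ℤ) : ℝ) := by
            have : 0 ≤ min |z - m| |z + m - n0| := le_min (abs_nonneg _) (abs_nonneg _)
            exact_mod_cast this
          generalize ((min |z - m| |z - y| : ℤ) : ℝ) = M1 at *
          generalize ((min |z - m| |z + m - n0| : ℤ) : ℝ) = M2 at *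
          have h2 : (l - e) * M1 ≤ (l - e) * (M2 + Δ) := by
            apply mul_le_mul_of_nonneg_left h1'; linarith
          have h3 : 0 ≤ e * M2 := by positivity
          have h4 : 0 ≤ e * Δ := by positivity
          linarith)
      refine hs.trans ?_
      have hD2 : |y - m| ≤ 2 * L := by
        have : |y - m| ≤ |y| + |m| := abs_sub _ _
        omega
      have hD2' : ((|y - m| : ℤ) : ℝ) ≤ 2 * L := by exact_mod_cast hD2
      generalize ((|y - m| : ℤ) : ℝ) = D at *
      calc 2 * Real.exp (-(l - e) * D + (5 * e * L + l * Δ) + (e2 * k2 + C + 2 * κ * Real.log Rr + (β0 + β)))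
          ≤ Real.exp (Real.log 3) * Real.exp (-(l - e) * D + (5 * e * L + l * Δ) + (e2 * k2 + C + 2 * κ * Real.log Rr + (β0 + β))) := by
            rw [Real.exp_log (by norm_num)]; gcongr; norm_num
        _ ≤ _ := by
            rw [← Real.exp_add]
            apply Real.exp_le_exp.mpr
            have h1 : e2 * k2 ≤ e * L := by
              calc e2 * k2 ≤ (e / (8 * G)) * (G * (8 * L)) := by
                    gcongr; exact min_le_right _ _
                _ = e * L := by field_simp
            have h2 : e * c / 64 * L ≤ e * L := by
              gcongr; nlinarith
            have h3 : e * D ≤ e * (2 * L) := by gcongr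
            have h4 : 40 * e * L ≤ ε * L := by gcongr
            have h5 : 0 ≤ e * L := by positivity
            linarith

lemma delta_nonneg {α θ : ℝ}
    (hB : IsBoundedUnder (· ≤ ·) cofinite (fun n : ℤ => -Real.log (distToInt (2 * θ + n * α)) / |(n : ℝ)|)) :
    0 ≤ deltaPhase α θ := by
  unfold deltaPhase
  refine le_limsup_of_frequently_le (Eventually.frequently (Eventually.of_forall fun n => ?_)) hB
  have h1 : distToInt (2 * θ + n * α) ≤ 1 := (abs_sub_round _).trans (by norm_num)
  have h2 : Real.log (distToInt (2 * θ + n * α)) ≤ 0 := Real.log_nonpos (abs_nonneg _) h1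
  exact div_nonneg (by linarith) (abs_nonneg _)

lemma cof_bound {p : ℤ → Prop} (h : ∀ᶠ n in cofinite, p n) : ∃ N : ℕ, ∀ n : ℤ, (N : ℤ) < |n| → p n := by
  have h : Set.Finite {n | ¬ p n} := h
  obtain ⟨N, hN⟩ := (h.image Int.natAbs).bddAbove
  refine ⟨N, fun n hn => ?_⟩
  by_contra hp
  have := hN ⟨n, hp, rfl⟩
  rw [Int.abs_eq_natAbs] at hn; omega

lemma delta_bound {α θ σ : ℝ} {κ : ℕ} (hD : Dio α σ κ)
    (hB : IsBoundedUnder (· ≤ ·) cofinite (fun n : ℤ => -Real.log (distToInt (2 * θ + n * α)) / |(n : ℝ)|))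
    {d : ℝ} (hd : deltaPhase α θ < d) :
    ∃ N1 : ℕ, ∀ n : ℤ, (N1 : ℤ) < |n| → Real.exp (-(d * ((|n| : ℤ) : ℝ))) ≤ sn (2 * θ + n * α) := by
  have h1 := eventually_lt_of_limsup_lt hd hB
  have h2 : ∀ᶠ n : ℤ in cofinite, sn (2 * θ + n * α) ≠ 0 := by
    rw [eventually_cofinite]
    refine Set.Subsingleton.finite ?_
    intro a ha b hb
    simp only [Set.mem_ofPred_eq, not_not] at ha hb
    by_contra hab
    have h := hD.ne (a - b) (sub_ne_zero.mpr hab)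
    have h' := sn_sub_le (2 * θ + a * α) (2 * θ + b * α)
    rw [ha, hb] at h'
    rw [show 2 * θ + a * α - (2 * θ + b * α) = ((a - b : ℤ) : ℝ) * α by push_cast; ring] at h'
    linarith
  obtain ⟨N, hN⟩ := cof_bound (h1.and h2)
  refine ⟨N, fun n hn => ?_⟩
  obtain ⟨h3, h4⟩ := hN n hn
  have hn0 : 0 < |(n:ℝ)| := by
    rw [← Int.cast_abs]; exact_mod_cast lt_of_le_of_lt (Nat.cast_nonneg N) hn
  rw [div_lt_iff₀ hn0] at h3
  have hd1 : 0 < distToInt (2 * θ + n * α) := by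
    refine lt_of_le_of_ne (abs_nonneg _) fun h0 => h4 ?_
    have := sn_le_dist (2 * θ + n * α)
    rw [← h0] at this
    exact le_antisymm (by linarith) (sn_nonneg _)
  have h5 := four_dist_le_sn (2 * θ + n * α)
  calc _ ≤ Real.exp (Real.log (distToInt (2 * θ + n * α))) := by
        rw [Real.exp_le_exp]; push_cast; linarith
    _ = distToInt (2 * θ + n * α) := Real.exp_log hd1
    _ ≤ _ := by linarith

lemma unbdd {α θ : ℝ}
    (hB : ¬ IsBoundedUnder (· ≤ ·) cofinite (fun n : ℤ => -Real.log (distToInt (2 * θ + n * α)) / |(n : ℝ)|))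
    {a : ℝ} (ha : 0 < a) (N : ℕ) :
    ∃ n : ℤ, (N : ℤ) < |n| ∧ sn (2 * θ + n * α) ≤ 2 * π * Real.exp (-(a * ((|n| : ℤ) : ℝ))) := by
  by_contra hcon
  push Not at hcon
  apply hB
  refine ⟨a, ?_⟩
  rw [eventually_map, eventually_cofinite]
  refine (Set.finite_Icc (-(N:ℤ)) N).subset ?_
  intro n hn
  simp only [Set.mem_ofPred_eq, not_le] at hn
  rw [Set.mem_Icc, ← abs_le]
  by_contra hN
  push Not at hN
  have h := hcon n hN
  have hn0 : 0 < |(n:ℝ)| := by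
    rw [← Int.cast_abs]; exact_mod_cast lt_of_le_of_lt (Nat.cast_nonneg N) hN
  rw [lt_div_iff₀ hn0] at hn
  have hd1 : 0 < distToInt (2 * θ + n * α) := by
    refine lt_of_le_of_ne (abs_nonneg _) fun h0 => ?_
    rw [← h0, Real.log_zero] at hn
    nlinarith
  have h2 : distToInt (2 * θ + n * α) ≤ Real.exp (-(a * ((|n| : ℤ) : ℝ))) := by
    rw [← Real.log_le_iff_le_exp hd1]; push_cast; linarith
  have h3 := sn_le_dist (2 * θ + n * α)
  have := mul_le_mul_of_nonneg_left h2 (show 0 ≤ 2 * π by positivity)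
  linarith

lemma js_wr {lam α θ E : ℝ} (hl : 0 ≤ lam) {φ : ℤ → ℝ} (h : IsEigenfunction (amoPot lam α θ) E φ)
    (hsum : ∀ F : Finset ℤ, ∑ i ∈ F, φ i ^ 2 ≤ 1) (h0 : Tendsto φ cofinite (nhds 0)) (n : ℤ) {e : ℝ}
    (hv : ∀ j, |amoPot lam α θ (n - j) - amoPot lam α θ j| ≤ e) (j : ℤ) :
    |φ (j + 1) * φ (n - j) - φ j * φ (n - (j + 1))| ≤ e := by
  have he : 0 ≤ e := (abs_nonneg _).trans (hv 0)
  set W : ℤ → ℝ := fun j => φ (j + 1) * φ (n - j) - φ j * φ (n - (j + 1)) with hW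
  have hstep : ∀ j, |W j - W (j - 1)| ≤ e * ((φ j ^ 2 + φ (n - j) ^ 2) / 2) := by
    intro j
    have e1 := h j
    have e2 := h (n - j)
    have : W j - W (j - 1) = (amoPot lam α θ (n - j) - amoPot lam α θ j) * (φ j * φ (n - j)) := by
      simp only [hW]
      rw [show j - 1 + 1 = j by ring, show n - (j - 1) = n - j + 1 by ring, show n - (j + 1) = n - j - 1 by ring]
      linear_combination φ (n - j) * e1 - φ j * e2
    rw [this, abs_mul]
    refine mul_le_mul (hv j) ?_ (abs_nonneg _) he
    rw [abs_le]; constructor <;> nlinarith [sq_nonneg (φ j + φ (n - j)), sq_nonneg (φ j - φ (n - j))]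
  have hN : ∀ N : ℕ, |W j| ≤ |W (j - N)| + e * (∑ i ∈ Finset.range N, (φ (j - i) ^ 2 + φ (n - (j - i)) ^ 2) / 2) := by
    intro N
    induction N with
    | zero => simp
    | succ N ih =>
      rw [Finset.sum_range_succ, mul_add]
      have h1 := hstep (j - N)
      have h2 : |W (j - N)| ≤ |W (j - N - 1)| + |W (j - N) - W (j - N - 1)| := by
        have := abs_add_le (W (j - N - 1)) (W (j - N) - W (j - N - 1))
        rwa [add_sub_cancel] at this
      rw [show j - ((N + 1 : ℕ) : ℤ) = j - N - 1 by push_cast; ring]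
      linarith
  have hN2 : ∀ N : ℕ, |W j| - e ≤ |W (j - N)| := by
    intro N
    have h1 : ∑ i ∈ Finset.range N, φ (j - i) ^ 2 ≤ 1 := by
      have := hsum ((Finset.range N).image (fun i : ℕ => j - (i:ℤ)))
      rwa [Finset.sum_image (by intro a _ b _ hab; simp only at hab; omega)] at this
    have h2 : ∑ i ∈ Finset.range N, φ (n - (j - i)) ^ 2 ≤ 1 := by
      have := hsum ((Finset.range N).image (fun i : ℕ => n - (j - (i:ℤ))))
      rwa [Finset.sum_image (by intro a _ b _ hab; simp only at hab; omega)] at this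
    have h3 := hN N
    rw [← Finset.sum_div, Finset.sum_add_distrib] at h3
    nlinarith
  have hlim : Tendsto (fun N : ℕ => |W (j - N)|) atTop (nhds 0) := by
    have key : ∀ f : ℕ → ℤ, Function.Injective f → Tendsto (fun N => φ (f N)) atTop (nhds 0) := by
      intro f hf
      have := h0.comp hf.tendsto_cofinite
      rwa [Nat.cofinite_eq_atTop] at this
    have a1 := key (fun N => j - N + 1) (by intro a b hab; simp only at hab; omega)
    have a2 := key (fun N => n - (j - N)) (by intro a b hab; simp only at hab; omega)
    have a3 := key (fun N => j - N) (by intro a b hab; simp only at hab; omega)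
    have a4 := key (fun N => n - (j - N + 1)) (by intro a b hab; simp only at hab; omega)
    have := ((a1.mul a2).sub (a3.mul a4)).abs
    simpa [hW] using this
  have := ge_of_tendsto' hlim hN2
  linarith

lemma js_mid {lam α θ E : ℝ} (hl : 0 ≤ lam) {φ : ℤ → ℝ} (h : IsEigenfunction (amoPot lam α θ) E φ)
    (hsum : ∀ F : Finset ℤ, ∑ i ∈ F, φ i ^ 2 ≤ 1) (h0 : Tendsto φ cofinite (nhds 0)) (n : ℤ) {η : ℝ}
    (hη : 0 ≤ η) (hv : ∀ j, |amoPot lam α θ (n - j) - amoPot lam α θ j| ≤ η ^ 2) :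
    ∃ ς : ℝ, |ς| = 1 ∧ |φ (n / 2) - ς * φ (n - n / 2)| ≤ (|E| + 2 * lam + 4) * η ∧
      |φ (n / 2 + 1) - ς * φ (n - (n / 2 + 1))| ≤ (|E| + 2 * lam + 4) * η := by
  have hW := js_wr hl h hsum h0 n hv (n / 2)
  have hC : 4 ≤ |E| + 2 * lam + 4 := by have := abs_nonneg E; linarith
  have hor : ∀ a b : ℝ, |a * b| ≤ η ^ 2 → |a| ≤ η ∨ |b| ≤ η := by
    intro a b hab
    by_contra hc
    push Not at hc
    rw [abs_mul] at hab
    nlinarith [mul_lt_mul'' hc.1 hc.2 hη hη]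
  have hηC : η ≤ (|E| + 2 * lam + 4) * η := by nlinarith
  rcases Int.emod_two_eq_zero_or_one n with hp | hp
  · set p := n / 2 with hpd
    have e1 : n - p = p := by omega
    have e2 : n - (p + 1) = p - 1 := by omega
    rw [e1, e2] at hW ⊢
    rw [show φ (p + 1) * φ p - φ p * φ (p - 1) = φ p * (φ (p + 1) - φ (p - 1)) by ring] at hW
    rcases hor _ _ hW with h1 | h1
    · refine ⟨-1, by norm_num, ?_, ?_⟩
      · rw [show φ p - -1 * φ p = 2 * φ p by ring, abs_mul, abs_two]; nlinarith
      · rw [show φ (p + 1) - -1 * φ (p - 1) = (E - amoPot lam α θ p) * φ p by linear_combination h p, abs_mul]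
        have hva : |amoPot lam α θ p| ≤ 2 * lam := vp_abs hl _
        have := abs_sub E (amoPot lam α θ p)
        exact mul_le_mul (by linarith) h1 (abs_nonneg _) (by linarith)
    · refine ⟨1, by norm_num, ?_, ?_⟩
      · rw [one_mul, sub_self, abs_zero]; positivity
      · rw [one_mul]; linarith
  · set p := n / 2 with hpd
    have e1 : n - p = p + 1 := by omega
    have e2 : n - (p + 1) = p := by omega
    rw [e1, e2] at hW ⊢
    rw [show φ (p + 1) * φ (p + 1) - φ p * φ p = (φ (p + 1) - φ p) * (φ (p + 1) + φ p) by ring] at hW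
    rcases hor _ _ hW with h1 | h1
    · refine ⟨1, by norm_num, ?_, ?_⟩
      · rw [one_mul, abs_sub_comm]; linarith
      · rw [one_mul]; linarith
    · refine ⟨-1, by norm_num, ?_, ?_⟩
      · rw [show φ p - -1 * φ (p + 1) = φ (p + 1) + φ p by ring]; linarith
      · rw [show φ (p + 1) - -1 * φ p = φ (p + 1) + φ p by ring]; linarith

lemma js_core {lam α θ E : ℝ} (hl : 0 ≤ lam) {φ : ℤ → ℝ} (h : IsEigenfunction (amoPot lam α θ) E φ)
    (hsum : ∀ F : Finset ℤ, ∑ i ∈ F, φ i ^ 2 ≤ 1) (h0 : Tendsto φ cofinite (nhds 0)) (n : ℤ) {η : ℝ}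
    (hη : 0 ≤ η) (hη1 : η ≤ 1) (hv : ∀ j, |amoPot lam α θ (n - j) - amoPot lam α θ j| ≤ η ^ 2) (j : ℤ) :
    |φ j| ≤ |φ (n - j)| + (|E| + 2 * lam + 4) ^ (n.natAbs + j.natAbs + 2) * η := by
  obtain ⟨ς, hς, hm1, hm2⟩ := js_mid hl h hsum h0 n hη hv
  set p := n / 2 with hp
  set C := |E| + 2 * lam + 4 with hC
  have hC4 : 4 ≤ C := by have := abs_nonneg E; linarith
  set u : ℤ → ℝ := fun j => φ j - ς * φ (n - j) with hu
  have hφ1 : ∀ i, |φ i| ≤ 1 := by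
    intro i
    have := hsum {i}
    rw [Finset.sum_singleton] at this
    exact (sq_le_one_iff_abs_le_one _).mp this
  have hgrow : ∀ k : ℕ, |u (p + k)| ≤ C ^ (k + 1) * η ∧ |u (p + k + 1)| ≤ C ^ (k + 1) * η := by
    intro k
    induction k with
    | zero => simp only [Nat.cast_zero, add_zero, zero_add, pow_one]; exact ⟨hm1, hm2⟩
    | succ k ih =>
      obtain ⟨i1, i2⟩ := ih
      have hpw : 1 ≤ C ^ (k + 1) := one_le_pow₀ (by linarith)
      have hM : η ≤ C ^ (k + 1) * η := by nlinarith
      set M := C ^ (k + 1) * η with hMd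
      have hM2 : C ^ (k + 1 + 1) * η = C * M := by rw [hMd]; ring
      rw [hM2]
      push_cast
      rw [← add_assoc]
      set q := p + k + 1 with hq
      have hM0 : 0 ≤ M := hη.trans hM
      refine ⟨i2.trans (by nlinarith), ?_⟩
      have e1 := h q
      have e2 := h (n - q)
      have : u (q + 1) = (E - amoPot lam α θ q) * u q - u (p + k) + ς * ((amoPot lam α θ (n - q) - amoPot lam α θ q) * φ (n - q)) := by
        simp only [hu]
        rw [show (p + k : ℤ) = q - 1 by omega, show n - (q - 1) = n - q + 1 by ring, show n - (q + 1) = n - q - 1 by ring]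
        linear_combination e1 - ς * e2
      rw [this]
      have b1 : |(E - amoPot lam α θ q) * u q| ≤ (C - 4) * M := by
        rw [abs_mul]
        have hva : |amoPot lam α θ q| ≤ 2 * lam := vp_abs hl _
        have := abs_sub E (amoPot lam α θ q)
        exact mul_le_mul (by linarith) i2 (abs_nonneg _) (by linarith)
      have b2 : |ς * ((amoPot lam α θ (n - q) - amoPot lam α θ q) * φ (n - q))| ≤ M := by
        rw [abs_mul, abs_mul, hς, one_mul]
        have : |amoPot lam α θ (n - q) - amoPot lam α θ q| * |φ (n - q)| ≤ η ^ 2 * 1 :=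
          mul_le_mul (hv q) (hφ1 _) (abs_nonneg _) (by positivity)
        nlinarith
      have b3 := abs_add_le ((E - amoPot lam α θ q) * u q - u (p + k)) (ς * ((amoPot lam α θ (n - q) - amoPot lam α θ q) * φ (n - q)))
      have b4 := abs_sub ((E - amoPot lam α θ q) * u q) (u (p + k))
      linarith
  have hall : ∀ i : ℤ, p ≤ i → i ≤ |n| + |j| + 1 + p → |u i| ≤ C ^ (n.natAbs + j.natAbs + 2) * η := by
    intro i hi hi2
    obtain ⟨k, hk⟩ := Int.eq_ofNat_of_zero_le (sub_nonneg.mpr hi)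
    rw [Int.abs_eq_natAbs, Int.abs_eq_natAbs] at hi2
    have := (hgrow k).1
    rw [show p + (k:ℤ) = i by omega] at this
    refine this.trans (mul_le_mul_of_nonneg_right (pow_le_pow_right₀ (by linarith) (by omega)) hη)
  have hrefl : ∀ i, |u (n - i)| = |u i| := by
    intro i
    have hs : ς * ς = 1 := by rw [← abs_mul_abs_self, hς]; norm_num
    have : u (n - i) = -ς * u i := by
      simp only [hu]; rw [sub_sub_cancel]; linear_combination (-φ (n - i)) * hs
    rw [this, abs_mul, abs_neg, hς, one_mul]
  have huj : |u j| ≤ C ^ (n.natAbs + j.natAbs + 2) * η := by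
    rw [Int.abs_eq_natAbs, Int.abs_eq_natAbs] at hall
    by_cases hj : p ≤ j
    · exact hall j hj (by omega)
    · rw [← hrefl]; exact hall (n - j) (by omega) (by omega)
  have : φ j = u j + ς * φ (n - j) := by simp [hu]
  calc |φ j| = |u j + ς * φ (n - j)| := by rw [← this]
    _ ≤ |u j| + |ς * φ (n - j)| := abs_add_le _ _
    _ ≤ _ := by rw [abs_mul, hς, one_mul]; linarith

lemma js {lam α θ E : ℝ} (hl : 0 < lam) {φ : ℤ → ℝ} (h : IsEigenfunction (amoPot lam α θ) E φ)
    (hsum : ∀ F : Finset ℤ, ∑ i ∈ F, φ i ^ 2 ≤ 1) (h0 : Tendsto φ cofinite (nhds 0))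
    (hB : ¬ IsBoundedUnder (· ≤ ·) cofinite (fun n : ℤ => -Real.log (distToInt (2 * θ + n * α)) / |(n : ℝ)|))
    (j : ℤ) : φ j = 0 := by
  set C := |E| + 2 * lam + 4 with hC
  have hC4 : 4 ≤ C := by have := abs_nonneg E; linarith
  have hlC : 0 < Real.log C := Real.log_pos (by linarith)
  set K := Real.sqrt (2 * lam * (2 * π)) with hK
  have hK0 : 0 ≤ K := Real.sqrt_nonneg _
  have hK2 : K ^ 2 = 2 * lam * (2 * π) := Real.sq_sqrt (by positivity)
  by_contra hj
  set ε := |φ j| / 2 with hε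
  have hε0 : 0 < ε := by have := abs_pos.mpr hj; positivity
  obtain ⟨N1, hN1⟩ := cof_bound (p := fun n => |φ (n - j)| < ε) (by
    have hinj : Function.Injective (fun n : ℤ => n - j) := fun a b hab => by simp only at hab; omega
    have := (h0.comp hinj.tendsto_cofinite).abs
    rw [abs_zero] at this
    exact this.eventually_lt_const hε0)
  have hlim : Tendsto (fun x : ℕ => Real.exp (-(x:ℝ))) atTop (nhds 0) :=
    Real.tendsto_exp_neg_atTop_nhds_zero.comp tendsto_natCast_atTop_atTop
  have e1 : ∀ᶠ x : ℕ in atTop, C ^ (j.natAbs + 2) * K * Real.exp (-(x:ℝ)) < ε := by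
    have := hlim.const_mul (C ^ (j.natAbs + 2) * K)
    rw [mul_zero] at this
    exact this.eventually_lt_const hε0
  have e2 : ∀ᶠ x : ℕ in atTop, K * Real.exp (-(x:ℝ)) < 1 := by
    have := hlim.const_mul K
    rw [mul_zero] at this
    exact this.eventually_lt_const one_pos
  obtain ⟨N2, hN2⟩ := eventually_atTop.mp (e1.and e2)
  obtain ⟨n, hn, hsn⟩ := unbdd hB (a := 2 * (Real.log C + 1)) (by linarith) (max N1 N2)
  rw [Int.abs_eq_natAbs] at hn hsn
  rw [Int.cast_natCast] at hsn
  set x := n.natAbs with hx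
  have hx1 : N1 < x := by have := le_max_left N1 N2; omega
  have hx2 : N2 ≤ x := by have := le_max_right N1 N2; omega
  obtain ⟨f1, f2⟩ := hN2 x hx2
  have f3 := hN1 n (by rw [Int.abs_eq_natAbs]; exact_mod_cast hx1)
  set η := K * Real.exp (-((Real.log C + 1) * x)) with hη
  have hη0 : 0 ≤ η := by positivity
  have hη1 : η = (C ^ x)⁻¹ * (K * Real.exp (-(x:ℝ))) := by
    rw [hη, show -((Real.log C + 1) * (x:ℝ)) = -(x * Real.log C) + -(x:ℝ) by ring, Real.exp_add, Real.exp_neg (x * Real.log C),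
      Real.exp_nat_mul, Real.exp_log (by linarith)]; ring
  have hCx : 1 ≤ C ^ x := one_le_pow₀ (by linarith)
  have hηle : η ≤ 1 := by
    rw [hη1]
    have : (C ^ x)⁻¹ ≤ 1 := inv_le_one_of_one_le₀ hCx
    have h3 : 0 ≤ K * Real.exp (-(x:ℝ)) := by positivity
    nlinarith
  have hη2 : η ^ 2 = 2 * lam * (2 * π * Real.exp (-(2 * (Real.log C + 1) * x))) := by
    rw [hη, mul_pow, hK2, ← Real.exp_nat_mul]; push_cast; ring_nf
  have hv : ∀ i, |amoPot lam α θ (n - i) - amoPot lam α θ i| ≤ η ^ 2 := by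
    intro i
    unfold amoPot
    rw [← mul_sub, abs_mul, cos_diff, abs_of_pos (by linarith), hη2]
    refine mul_le_mul_of_nonneg_left ?_ (by linarith)
    rw [show θ + ((n - i : ℤ) : ℝ) * α + (θ + i * α) = 2 * θ + n * α by push_cast; ring]
    have := sn_le_two (θ + ((n - i : ℤ) : ℝ) * α - (θ + i * α))
    nlinarith [sn_nonneg (2 * θ + n * α), sn_nonneg (θ + ((n - i : ℤ) : ℝ) * α - (θ + i * α))]
  have hc := js_core hl.le h hsum h0 n hη0 hηle hv j
  have : C ^ (x + j.natAbs + 2) * η = C ^ (j.natAbs + 2) * K * Real.exp (-(x:ℝ)) := by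
    rw [hη1, show x + j.natAbs + 2 = x + (j.natAbs + 2) by ring, pow_add]
    field_simp
  rw [this] at hc
  have : |φ j| = 2 * ε := by rw [hε]; ring
  linarith

lemma far {lam α σ θ d : ℝ} {κ : ℕ} (hlam : 1 < lam) (hD : Dio α σ κ) (hd0 : 0 ≤ d) (hd : d < Real.log lam)
    {N1 : ℕ} (hN1 : ∀ n : ℤ, (N1 : ℤ) < |n| → Real.exp (-(d * ((|n| : ℤ) : ℝ))) ≤ sn (2 * θ + n * α)) :
    ∃ c : ℝ, 0 < c ∧ ∃ C3 : ℕ, 1 ≤ C3 ∧ ∃ L0 : ℕ, ∀ L : ℕ, L0 ≤ L → ∀ (E : ℝ) (φ : ℤ → ℝ) (m : ℤ),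
      Nrm lam α θ E φ m → |m| ≤ L → ∀ y : ℤ, ((C3 * L : ℕ) : ℤ) < |y| → |φ y| ≤ Real.exp (-c * ((|y| : ℤ) : ℝ)) := by
  set l := Real.log lam with hl
  have hl0 : 0 < l := by linarith
  set g := l - d with hg
  have hg0 : 0 < g := by linarith
  set t := g / (8 * l) with ht
  have ht0 : 0 < t := by positivity
  have htl : l * t = g / 8 := by rw [ht]; field_simp
  have ht8 : t ≤ 1 / 8 := by rw [ht, div_le_div_iff₀ (by positivity) (by norm_num)]; linarith
  obtain ⟨C3, hC3⟩ := exists_nat_ge (1 / t)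
  have hC3t : 1 ≤ C3 * t := by rwa [div_le_iff₀ ht0] at hC3
  obtain ⟨L1, hL1⟩ := propD hlam hD θ (ε := g / 16) (by positivity)
  have hC31 : 1 ≤ C3 := by
    rcases Nat.eq_zero_or_pos C3 with h | h
    · rw [h] at hC3t; norm_num at hC3t
    · exact h
  refine ⟨g / 16, by positivity, C3, hC31, max L1 (2 * N1 + 2), ?_⟩
  intro L hL E φ m hφ hm y hy
  have hLL : L ≤ C3 * L := Nat.le_mul_of_pos_left _ hC31
  rw [Int.abs_eq_natAbs] at hy ⊢
  set Y := y.natAbs with hY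
  have hYL : C3 * L < Y := by exact_mod_cast hy
  have hL1' : L1 ≤ L := (le_max_left _ _).trans hL
  have hL2' : 2 * N1 + 2 ≤ L := (le_max_right _ _).trans hL
  obtain ⟨n0, hn0⟩ := hL1 Y (by omega)
  obtain ⟨hA, hBr⟩ := hn0 E φ m hφ (by omega) y (by rw [Int.abs_eq_natAbs])
  have hYr : (L:ℝ) ≤ t * Y := by
    have h1 : ((C3 * L : ℕ):ℝ) ≤ Y := by exact_mod_cast hYL.le
    push_cast at h1
    nlinarith [(Nat.cast_nonneg L : (0:ℝ) ≤ L)]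
  have hY0 : (0:ℝ) < Y := by exact_mod_cast (by omega : 0 < Y)
  have hyY : |(y:ℝ)| = Y := by rw [← Int.cast_abs, Int.abs_eq_natAbs]; rfl
  have hmL : |(m:ℝ)| ≤ L := by rw [← Int.cast_abs]; exact_mod_cast hm
  have hym : (1 - t) * Y ≤ |(y:ℝ) - m| := by
    have := abs_sub_abs_le_abs_sub (y:ℝ) m
    nlinarith
  rw [Int.cast_natCast]
  push_cast at hA hBr
  by_cases h : t * Y ≤ |(y:ℝ) + m - n0|
  · refine hA.trans (Real.exp_le_exp.mpr ?_)
    have hmin : t * Y ≤ min |(y:ℝ) - m| |(y:ℝ) + m - n0| := by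
      refine le_min ?_ h
      refine le_trans ?_ hym
      nlinarith
    have := mul_le_mul_of_nonneg_left hmin hl0.le
    rw [← mul_assoc, htl] at this
    linarith
  · push Not at h
    have hn1 : |(n0:ℝ)| ≤ (1 + 2 * t) * Y := by
      have h1 : (n0:ℝ) = y + m - (y + m - n0) := by ring
      have h2 := abs_sub ((y:ℝ) + m) (y + m - n0)
      rw [← h1] at h2
      have h3 := abs_add_le (y:ℝ) m
      nlinarith
    have hn2 : (1 - 2 * t) * Y ≤ |(n0:ℝ)| := by
      have h1 : (y:ℝ) = n0 - m + (y + m - n0) := by ring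
      have h2 := abs_add_le ((n0:ℝ) - m) (y + m - n0)
      rw [← h1] at h2
      have h3 := abs_sub (n0:ℝ) m
      nlinarith
    have hn3 : (N1 : ℤ) < |n0| := by
      have h1 : (2 * N1 + 2 : ℝ) ≤ Y := by exact_mod_cast (by omega : 2 * N1 + 2 ≤ Y)
      have h2 : (N1:ℝ) < |(n0:ℝ)| := by nlinarith
      rw [← Int.cast_abs] at h2; exact_mod_cast h2
    have hb := hBr (d * |(n0:ℝ)|) (by positivity) (by have := hN1 n0 hn3; push_cast at this; exact this)
    refine hb.trans (Real.exp_le_exp.mpr ?_)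
    have a1 := mul_le_mul_of_nonneg_left hym hl0.le
    have a2 := mul_le_mul_of_nonneg_left h.le hl0.le
    have a3 := mul_le_mul_of_nonneg_left hn1 hd0
    have a4 : d * t ≤ l * t := mul_le_mul_of_nonneg_right hd.le ht0.le
    have a5 : -l * ((1 - t) * Y) + l * (t * Y) + d * ((1 + 2 * t) * Y) + g / 16 * Y ≤ -(g / 16) * Y := by
      have : -l * ((1 - t) * Y) + l * (t * Y) + d * ((1 + 2 * t) * Y) + g / 16 * Y =
        (-l + 2 * (l * t) + d + 2 * (d * t) + g / 16) * Y := by ring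
      rw [this]
      exact mul_le_mul_of_nonneg_right (by linarith) hY0.le
    linarith

lemma wcount_pos {r : ℝ} (hr0 : 0 ≤ r) (hr1 : r < 1) (L K N1 : ℕ) (n0 : ℤ) (hn0 : 0 ≤ n0) :
    ∃ W : Finset ℤ, (W.card : ℝ) ≤ 2 * (L + K + N1) + 1 + r * L + 4 * K + 1 ∧
      ∀ y m : ℤ, |m| ≤ L → y ∉ W → (K:ℤ) < |y - m| ∧ (|y + m - n0| ≤ K → (N1:ℤ) < |n0| ∧
        r * |(n0:ℝ)| + 3 * K ≤ |(n0:ℝ) - 2 * m|) := by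
  set A : ℤ := L + K + N1 with hA
  set B1 : ℤ := max (A + 1) (n0 - L - K) with hB1
  set B2 : ℤ := ⌊(n0:ℝ) * (1 + r) / 2 + 5 / 2 * K⌋ with hB2
  refine ⟨Finset.Icc (-A) A ∪ Finset.Icc B1 B2, ?_, ?_⟩
  · have h1 := Finset.card_union_le (Finset.Icc (-A) A) (Finset.Icc B1 B2)
    rw [Int.card_Icc, Int.card_Icc] at h1
    have h2 : (((Finset.Icc (-A) A ∪ Finset.Icc B1 B2).card : ℕ) : ℝ) ≤ ((A + 1 - -A).toNat : ℝ) + ((B2 + 1 - B1).toNat : ℝ) := by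
      exact_mod_cast h1
    have h3 : ((A + 1 - -A).toNat : ℝ) = 2 * (L + K + N1) + 1 := by
      have : (A + 1 - -A).toNat = 2 * (L + K + N1) + 1 := by omega
      rw [this]; push_cast; ring
    have h4 : ((B2 + 1 - B1).toNat : ℝ) ≤ r * L + 4 * K + 1 := by
      have h5 : (((B2 + 1 - B1).toNat : ℤ) : ℝ) = ((max (B2 + 1 - B1) 0 : ℤ) : ℝ) := by
        rw [Int.toNat_eq_max]
      rw [Int.cast_natCast] at h5
      rw [h5]; push_cast
      refine max_le ?_ (by positivity)
      have b2 : (B2:ℝ) ≤ (n0:ℝ) * (1 + r) / 2 + 5 / 2 * K := Int.floor_le _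
      have b1 : ((A + 1 : ℤ) : ℝ) ≤ B1 := by exact_mod_cast le_max_left _ _
      have b1' : ((n0 - L - K : ℤ) : ℝ) ≤ B1 := by exact_mod_cast le_max_right _ _
      rw [hA] at b1
      push_cast at b1 b1'
      have hK0 : (0:ℝ) ≤ K := Nat.cast_nonneg _
      have hN0 : (0:ℝ) ≤ N1 := Nat.cast_nonneg _
      rcases le_total (n0:ℝ) (2 * L) with h | h <;> nlinarith
    linarith
  · intro y m hm hy
    rw [Finset.mem_union, Finset.mem_Icc, Finset.mem_Icc, not_or] at hy
    obtain ⟨hy1, hy2⟩ := hy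
    rw [← abs_le] at hy1
    push Not at hy1
    constructor
    · have := abs_add_le (y - m) m
      rw [sub_add_cancel] at this
      omega
    · intro hk
      have hN : (N1:ℤ) < |n0| := by
        by_contra hc
        push Not at hc
        have h1 := abs_add_le ((y + m - n0) + n0) (-m)
        have h2 := abs_add_le (y + m - n0) n0
        rw [show y + m - n0 + n0 + -m = y by ring, abs_neg] at h1
        omega
      refine ⟨hN, ?_⟩
      by_contra hc
      push Not at hc
      have hn0r : (0:ℝ) ≤ n0 := by exact_mod_cast hn0
      rw [abs_of_nonneg hn0r] at hc
      have hc' := (abs_lt.mp hc).2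
      have hmm := abs_le.mp hm
      have hkk := abs_le.mp hk
      have hkr : (y:ℝ) + m - n0 ≤ K := by exact_mod_cast hkk.2
      apply hy2
      have hyB2 : y ≤ B2 := by
        rw [hB2, Int.le_floor]
        linarith
      have hy0 : n0 - L - K ≤ y := by linarith [hmm.2, hkk.1]
      refine ⟨max_le ?_ hy0, hyB2⟩
      rcases abs_cases y with ⟨h, _⟩ | ⟨h, _⟩ <;> omega

lemma wcount {r : ℝ} (hr0 : 0 ≤ r) (hr1 : r < 1) (L K N1 : ℕ) (n0 : ℤ) :
    ∃ W : Finset ℤ, (W.card : ℝ) ≤ 2 * (L + K + N1) + 1 + r * L + 4 * K + 1 ∧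
      ∀ y m : ℤ, |m| ≤ L → y ∉ W → (K:ℤ) < |y - m| ∧ (|y + m - n0| ≤ K → (N1:ℤ) < |n0| ∧
        r * |(n0:ℝ)| + 3 * K ≤ |(n0:ℝ) - 2 * m|) := by
  rcases le_total 0 n0 with h | h
  · exact wcount_pos hr0 hr1 L K N1 n0 h
  · obtain ⟨W, h1, h2⟩ := wcount_pos hr0 hr1 L K N1 (-n0) (by omega)
    refine ⟨W.image (fun y => -y), ?_, ?_⟩
    · rwa [Finset.card_image_of_injective _ neg_injective]
    · intro y m hm hy
      have hy' : -y ∉ W := fun hc => hy (Finset.mem_image.mpr ⟨-y, hc, by simp⟩)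
      obtain ⟨a, b⟩ := h2 (-y) (-m) (by rwa [abs_neg]) hy'
      refine ⟨by rwa [show -y - -m = -(y - m) by ring, abs_neg] at a, fun hk => ?_⟩
      obtain ⟨b1, b2⟩ := b (by rwa [show -y + -m - -n0 = -(y + m - n0) by ring, abs_neg])
      rw [abs_neg] at b1
      push_cast at b2
      rw [abs_neg, show -(n0:ℝ) - 2 * -(m:ℝ) = -((n0:ℝ) - 2 * m) by ring, abs_neg] at b2
      exact ⟨b1, b2⟩

lemma near {lam α σ θ d τ : ℝ} {κ : ℕ} (hlam : 1 < lam) (hD : Dio α σ κ) (hd0 : 0 ≤ d) (hd : d < Real.log lam)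
    (hτ : 0 < τ)
    {N1 : ℕ} (hN1 : ∀ n : ℤ, (N1 : ℤ) < |n| → Real.exp (-(d * ((|n| : ℤ) : ℝ))) ≤ sn (2 * θ + n * α)) :
    ∃ c : ℝ, 0 < c ∧ ∃ L0 : ℕ, ∀ L : ℕ, L0 ≤ L → ∃ W : Finset ℤ, (W.card : ℝ) ≤ (2 + d / Real.log lam + τ) * L ∧
      ∀ (E : ℝ) (φ : ℤ → ℝ) (m : ℤ),
      Nrm lam α θ E φ m → |m| ≤ L → ∀ y : ℤ, y ∉ W → |φ y| ≤ Real.exp (-c * (((|y| : ℤ) : ℝ) + L)) := by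
  obtain ⟨c1, hc1, C3, hC3, L1, hfar⟩ := far hlam hD hd0 hd hN1
  set l := Real.log lam with hl
  have hl0 : 0 < l := by linarith
  have hC3r : (1:ℝ) ≤ C3 := by exact_mod_cast hC3
  set t := τ / 12 with ht
  have ht0 : 0 < t := by positivity
  obtain ⟨L2, hL2⟩ := propD hlam hD θ (ε := l * t / (2 * C3)) (by positivity)
  obtain ⟨L3, hL3⟩ := exists_nat_ge ((8 + 2 * N1) / (6 * t))
  refine ⟨min (c1 / 2) (l * t / 2 / (C3 + 1)), by positivity, max (max L1 L2) L3, fun L hL => ?_⟩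
  have hLL1 : L1 ≤ L := (le_max_left _ _).trans ((le_max_left _ _).trans hL)
  have hLL2 : L2 ≤ L := (le_max_right _ _).trans ((le_max_left _ _).trans hL)
  have hLL3 : L3 ≤ L := (le_max_right _ _).trans hL
  have hLr0 : (0:ℝ) ≤ L := Nat.cast_nonneg _
  have hLL : L ≤ C3 * L := Nat.le_mul_of_pos_left _ hC3
  obtain ⟨n0, hn0⟩ := hL2 (C3 * L) (hLL2.trans hLL)
  set K := ⌈t * L⌉₊ with hK
  have hK1 : t * L ≤ K := Nat.le_ceil _
  have hK2 : (K:ℝ) < t * L + 1 := Nat.ceil_lt_add_one (by positivity)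
  obtain ⟨W, hW, hWy⟩ := wcount (r := d / l) (by positivity) (by rwa [div_lt_one hl0]) L K N1 n0
  refine ⟨W, ?_, ?_⟩
  · have h1 : (8 + 2 * N1) ≤ (L:ℝ) * (6 * t) := by
      rw [← div_le_iff₀ (by positivity)]
      exact hL3.trans (by exact_mod_cast hLL3)
    have h2 : τ * L = 12 * (t * L) := by rw [ht]; ring
    have h3 : (2 + d / l + τ) * L = 2 * L + d / l * L + τ * L := by ring
    rw [h3, h2]
    linarith
  · intro E φ m hφ hm y hy
    set c := min (c1 / 2) (l * t / 2 / (C3 + 1)) with hc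
    by_cases hyC : |y| ≤ ((C3 * L : ℕ) : ℤ)
    · have hsmall : |φ y| ≤ Real.exp (-(l * t / 2) * L) := by
        obtain ⟨hA, hB⟩ := hn0 E φ m hφ (hm.trans (by exact_mod_cast hLL)) y hyC
        obtain ⟨w1, w2⟩ := hWy y m hm hy
        have w1r : (K:ℝ) ≤ |(y:ℝ) - m| := by
          have : (K:ℤ) ≤ |y - m| := w1.le
          have : ((K:ℤ):ℝ) ≤ ((|y - m| : ℤ) : ℝ) := by exact_mod_cast this
          push_cast at this; exact this
        have eε : l * t / (2 * C3) * ((C3 * L : ℕ) : ℝ) = l * (t * L) / 2 := by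
          push_cast; field_simp
        rw [eε] at hA hB
        have hlK := mul_le_mul_of_nonneg_left hK1 hl0.le
        push_cast at hA hB
        by_cases hk : |y + m - n0| ≤ K
        · obtain ⟨w3, w4⟩ := w2 hk
          have hb := hB (d * |(n0:ℝ)|) (by positivity) (by have := hN1 n0 w3; push_cast at this; exact this)
          refine hb.trans (Real.exp_le_exp.mpr ?_)
          have hkr : |(y:ℝ) + m - n0| ≤ K := by
            have : ((|y + m - n0| : ℤ) : ℝ) ≤ ((K:ℤ):ℝ) := by exact_mod_cast hk
            push_cast at this; exact this
          have a0 : |(n0:ℝ) - 2 * m| ≤ |(y:ℝ) - m| + |(y:ℝ) + m - n0| := by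
            have := abs_sub ((y:ℝ) - m) (y + m - n0)
            rwa [show (y:ℝ) - m - (y + m - n0) = n0 - 2 * m by ring] at this
          have a1 : l * (d / l * |(n0:ℝ)| + 3 * K) ≤ l * (|(y:ℝ) - m| + K) :=
            mul_le_mul_of_nonneg_left (by linarith) hl0.le
          have a2 : l * (d / l * |(n0:ℝ)| + 3 * K) = d * |(n0:ℝ)| + 3 * (l * K) := by field_simp
          have a3 := mul_le_mul_of_nonneg_left hkr hl0.le
          have a4 : l * (|(y:ℝ) - m| + K) = l * |(y:ℝ) - m| + l * K := by ring
          have a5 : 0 ≤ l * (t * L) := by positivity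
          rw [a2, a4] at a1
          linarith
        · push Not at hk
          refine hA.trans (Real.exp_le_exp.mpr ?_)
          have hkr : (K:ℝ) ≤ |(y:ℝ) + m - n0| := by
            have : ((K:ℤ):ℝ) ≤ ((|y + m - n0| : ℤ) : ℝ) := by exact_mod_cast hk.le
            push_cast at this; exact this
          have := mul_le_mul_of_nonneg_left (le_min w1r hkr) hl0.le
          linarith
      refine hsmall.trans (Real.exp_le_exp.mpr ?_)
      have h1 : ((|y| : ℤ) : ℝ) ≤ C3 * L := by exact_mod_cast hyC
      have h2 : c ≤ l * t / 2 / (C3 + 1) := min_le_right _ _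
      have h3 : c * (((|y| : ℤ) : ℝ) + L) ≤ l * t / 2 / (C3 + 1) * ((C3 + 1) * L) := by
        refine mul_le_mul h2 (by linarith) ?_ (by positivity)
        have : (0:ℝ) ≤ ((|y| : ℤ) : ℝ) := by exact_mod_cast abs_nonneg y
        linarith
      have h4 : l * t / 2 / (C3 + 1) * ((C3 + 1) * L) = l * t / 2 * L := by field_simp
      linarith
    · push Not at hyC
      refine (hfar L hLL1 E φ m hφ hm y hyC).trans (Real.exp_le_exp.mpr ?_)
      have h1 : (L:ℝ) ≤ ((|y| : ℤ) : ℝ) := by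
        have : (L:ℤ) ≤ |y| := by have : (L:ℤ) ≤ ((C3 * L : ℕ) : ℤ) := by exact_mod_cast hLL
                                 omega
        exact_mod_cast this
      have h2 : c ≤ c1 / 2 := min_le_left _ _
      have h3 : c * (((|y| : ℤ) : ℝ) + L) ≤ c1 / 2 * (2 * ((|y| : ℤ) : ℝ)) :=
        mul_le_mul h2 (by linarith) (by linarith) (by positivity)
      linarith

lemma exp_summable {c : ℝ} (hc : 0 < c) : Summable (fun y : ℤ => Real.exp (-c * ((|y| : ℤ) : ℝ))) := by
  have hn : Summable (fun n : ℕ => Real.exp (-c * n)) := by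
    have := Real.summable_exp_nat_mul_iff.mpr (show -c < 0 by linarith)
    simpa [mul_comm] using this
  refine Summable.of_nat_of_neg ?_ ?_ <;> simpa using hn

lemma sum_sq (v : lp (fun _ : ℤ => ℝ) 2) : HasSum (fun y => v y ^ 2) (‖v‖ ^ 2) := by
  have h := lp.hasSum_norm (p := 2) (by norm_num) v
  simpa using h

lemma main_bdd (lam α θ : ℝ) (hlam : 1 < lam) (hα : IsDiophantine α)
    (hB : IsBoundedUnder (· ≤ ·) cofinite (fun n : ℤ => -Real.log (distToInt (2 * θ + n * α)) / |(n : ℝ)|))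
    (hδ : deltaPhase α θ < Real.log lam)
    (Φ : HilbertBasis ℕ ℝ (lp (fun _ : ℤ => ℝ) 2))
    (heig : ∀ s : ℕ, ∃ E : ℝ, IsEigenfunction (amoPot lam α θ) E (fun n => Φ s n))
    (m : ℕ → ℤ) (hm : ∀ (s : ℕ) (n : ℤ), |Φ s n| ≤ |Φ s (m s)|) {η : ℝ} (hη : 0 < η) :
    ∀ᶠ L : ℕ in atTop, (Set.ncard {s : ℕ | |m s| ≤ (L : ℤ)} : ℝ) / (2 * L + 1)
      ≤ (1 + deltaPhase α θ / (2 * Real.log lam) + η) * (1 + η) := by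
  obtain ⟨σ, κ, hD⟩ := exists_dio hα
  have hδ0 := delta_nonneg hB
  set δ := deltaPhase α θ with hδd
  set l := Real.log lam with hl
  have hl0 : 0 < l := by linarith
  obtain ⟨d, hd1, hd2⟩ := exists_between (show δ < min l (δ + η * l) from lt_min hδ (by nlinarith [mul_pos hη hl0]))
  have hdl : d < l := lt_of_lt_of_le hd2 (min_le_left _ _)
  have hdη : d < δ + η * l := lt_of_lt_of_le hd2 (min_le_right _ _)
  have hd0 : 0 ≤ d := by linarith
  obtain ⟨N1, hN1⟩ := delta_bound hD hB hd1
  obtain ⟨c, hc, L0, hnear⟩ := near hlam hD hd0 hdl hη hN1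
  have hS := exp_summable (c := 2 * c) (by positivity)
  set S := ∑' y : ℤ, Real.exp (-(2 * c) * ((|y| : ℤ) : ℝ)) with hSd
  have hsmall : ∀ᶠ L : ℕ in atTop, Real.exp (-(2 * c) * L) * S < η / (1 + η) := by
    have h1 : Tendsto (fun L : ℕ => Real.exp (-(2 * c) * L)) atTop (nhds 0) := by
      refine Real.tendsto_exp_atBot.comp ?_
      exact (tendsto_natCast_atTop_atTop).const_mul_atTop_of_neg (by linarith)
    have h2 := h1.mul_const S
    rw [zero_mul] at h2
    exact h2.eventually_lt_const (by positivity)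
  filter_upwards [hsmall, eventually_ge_atTop L0] with L hLs hL
  obtain ⟨W, hW, hdec⟩ := hnear L hL
  have hnorm : ∀ s, ‖Φ s‖ = 1 := fun s => Φ.orthonormal.1 s
  have hss : ∀ s, HasSum (fun y => Φ s y ^ 2) 1 := by
    intro s; have := sum_sq (Φ s); rwa [hnorm, one_pow] at this
  have hle1 : ∀ s y, |Φ s y| ≤ 1 := by
    intro s y
    rw [← sq_le_one_iff_abs_le_one]
    exact le_hasSum (hss s) y (fun _ _ => sq_nonneg _)
  have hne : ∀ s, Φ s (m s) ≠ 0 := by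
    intro s h0
    have : ∀ y, Φ s y ^ 2 = 0 := by
      intro y
      have := hm s y
      rw [h0, abs_zero] at this
      rw [abs_nonpos_iff.mp this]; norm_num
    have h2 := hss s
    simp only [this] at h2
    exact one_ne_zero (h2.unique hasSum_zero)
  have hbd : ∀ s, |m s| ≤ (L:ℤ) → ∀ y, y ∉ W → Φ s y ^ 2 ≤ Real.exp (-(2 * c) * L) * Real.exp (-(2 * c) * ((|y| : ℤ) : ℝ)) := by
    intro s hs y hy
    obtain ⟨E, hE⟩ := heig s
    have hN : Nrm lam α θ E (fun n => Φ s n / Φ s (m s)) (m s) := by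
      refine ⟨fun n => ?_, ?_, fun n => ?_⟩
      · have := hE n
        simp only at this ⊢
        have h0 := hne s
        field_simp
        linarith
      · simp [div_self (hne s)]
      · simp only
        rw [abs_div, div_le_one (abs_pos.mpr (hne s))]; exact hm s n
    have h1 := hdec E _ _ hN hs y hy
    simp only at h1
    rw [abs_div, div_le_iff₀ (abs_pos.mpr (hne s))] at h1
    have h2 : |Φ s y| ≤ Real.exp (-c * (((|y| : ℤ) : ℝ) + L)) := by
      refine h1.trans ?_
      have := hle1 s (m s)
      have h3 := Real.exp_pos (-c * (((|y| : ℤ) : ℝ) + L))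
      nlinarith
    calc Φ s y ^ 2 = |Φ s y| ^ 2 := (sq_abs _).symm
      _ ≤ Real.exp (-c * (((|y| : ℤ) : ℝ) + L)) ^ 2 := pow_le_pow_left₀ (abs_nonneg _) h2 2
      _ = _ := by rw [← Real.exp_nat_mul, ← Real.exp_add]; congr 1; push_cast; ring
  have hmass : ∀ s, |m s| ≤ (L:ℤ) → 1 / (1 + η) ≤ ∑ y ∈ W, Φ s y ^ 2 := by
    intro s hs
    have h1 := (hss s).summable.sum_add_tsum_subtype_compl W
    rw [(hss s).tsum_eq] at h1
    have hS' : Summable (fun y : ℤ => Real.exp (-(2 * c) * L) * Real.exp (-(2 * c) * ((|y| : ℤ) : ℝ))) := hS.mul_left _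
    have h2 : ∑' y : {y // y ∉ W}, Φ s y ^ 2 ≤ Real.exp (-(2 * c) * L) * S := by
      rw [hSd, ← tsum_mul_left]
      calc _ ≤ ∑' y : {y // y ∉ W}, Real.exp (-(2 * c) * L) * Real.exp (-(2 * c) * ((|y.1| : ℤ) : ℝ)) := by
            refine Summable.tsum_le_tsum (fun y => hbd s hs y.1 y.2) ?_ ?_
            · exact (hss s).summable.subtype (fun y => y ∉ W)
            · exact hS'.subtype (fun y => y ∉ W)
        _ ≤ _ := hS'.tsum_subtype_le _ (fun y => y ∉ W) (fun y => by positivity)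
    have h3 : 1 / (1 + η) = 1 - η / (1 + η) := by field_simp; ring
    rw [h3]; linarith
  have hcol : ∀ (F : Finset ℕ) (y : ℤ), ∑ s ∈ F, Φ s y ^ 2 ≤ 1 := by
    intro F y
    have h := Φ.orthonormal.sum_inner_products_le (lp.single 2 y (1:ℝ)) (s := F)
    have hn1 : ‖lp.single (E := fun _ : ℤ => ℝ) 2 y (1:ℝ)‖ = 1 := by
      rw [lp.norm_single (by norm_num)]; simp
    rw [hn1, one_pow] at h
    refine le_trans (le_of_eq (Finset.sum_congr rfl fun s _ => ?_)) h
    rw [lp.inner_single_right]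
    simp
  have hF : ∀ F : Finset ℕ, (∀ s ∈ F, |m s| ≤ (L:ℤ)) → (F.card : ℝ) ≤ (1 + η) * W.card := by
    intro F hFm
    have h1 : (F.card : ℝ) * (1 / (1 + η)) ≤ ∑ s ∈ F, ∑ y ∈ W, Φ s y ^ 2 := by
      rw [← nsmul_eq_mul]
      exact Finset.card_nsmul_le_sum _ _ _ (fun s hs => hmass s (hFm s hs))
    rw [Finset.sum_comm] at h1
    have h2 : ∑ y ∈ W, ∑ s ∈ F, Φ s y ^ 2 ≤ W.card • (1:ℝ) :=
      Finset.sum_le_card_nsmul _ _ _ (fun y _ => hcol F y)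
    rw [nsmul_eq_mul, mul_one] at h2
    have h3 := h1.trans h2
    rw [mul_one_div, div_le_iff₀ (by positivity)] at h3
    linarith
  have hcard : (Set.ncard {s : ℕ | |m s| ≤ (L : ℤ)} : ℝ) ≤ (1 + η) * W.card := by
    by_cases hfin : {s : ℕ | |m s| ≤ (L : ℤ)}.Finite
    · rw [Set.ncard_eq_toFinset_card _ hfin]
      exact hF _ (fun s hs => by simpa using hs)
    · rw [Set.Infinite.ncard hfin]; simp; positivity
  rw [div_le_iff₀ (by positivity)]
  refine hcard.trans ?_
  have hLr0 : (0:ℝ) ≤ L := Nat.cast_nonneg _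
  have hdl2 : d / l ≤ δ / l + η := by
    rw [← sub_nonneg]
    have : δ / l + η - d / l = (δ + η * l - d) / l := by field_simp
    rw [this]; exact div_nonneg (by linarith) hl0.le
  have hW2 : (W.card : ℝ) ≤ (1 + δ / (2 * l) + η) * (2 * L + 1) := by
    have h1 : (1 + δ / (2 * l) + η) * (2 * L + 1) = (2 + δ / l + 2 * η) * L + (1 + δ / (2 * l) + η) := by field_simp
    have h2 : 0 ≤ 1 + δ / (2 * l) + η := by positivity
    have h3 : (2 + d / l + η) * L ≤ (2 + δ / l + 2 * η) * L := mul_le_mul_of_nonneg_right (by linarith) hLr0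
    linarith
  have := mul_le_mul_of_nonneg_left hW2 (show 0 ≤ 1 + η by linarith)
  linarith

theorem amo_upper_density_bound
    (lam α θ : ℝ) (hlam : 1 < lam) (hα : IsDiophantine α)
    (hδ : deltaPhase α θ < Real.log lam)
    (Φ : HilbertBasis ℕ ℝ (lp (fun _ : ℤ => ℝ) 2))
    (heig : ∀ s : ℕ, ∃ E : ℝ, IsEigenfunction (amoPot lam α θ) E (fun n => Φ s n))
    (m : ℕ → ℤ) (hm : ∀ (s : ℕ) (n : ℤ), |Φ s n| ≤ |Φ s (m s)|) :
    limsup (fun L : ℕ => (Set.ncard {s : ℕ | |m s| ≤ (L : ℤ)} : ℝ) / (2 * L + 1)) atTop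
      ≤ 1 + deltaPhase α θ / (2 * Real.log lam) := by
  by_cases hB : IsBoundedUnder (· ≤ ·) cofinite (fun n : ℤ => -Real.log (distToInt (2 * θ + n * α)) / |(n : ℝ)|)
  · have hl0 : 0 < Real.log lam := Real.log_pos hlam
    have hδ0 := delta_nonneg hB
    set A := 1 + deltaPhase α θ / (2 * Real.log lam) with hA
    have key : ∀ η : ℝ, 0 < η → limsup (fun L : ℕ => (Set.ncard {s : ℕ | |m s| ≤ (L : ℤ)} : ℝ) / (2 * L + 1)) atTop
        ≤ (A + η) * (1 + η) := by
      intro η hη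
      refine limsup_le_of_le ?_ (main_bdd lam α θ hlam hα hB hδ Φ heig m hm hη)
      refine isCoboundedUnder_le_of_le atTop (x := 0) (fun L => by positivity)
    have hlim : Tendsto (fun η : ℝ => (A + η) * (1 + η)) (nhdsWithin 0 (Set.Ioi 0)) (nhds A) := by
      have : Tendsto (fun η : ℝ => (A + η) * (1 + η)) (nhds 0) (nhds ((A + 0) * (1 + 0))) :=
        Continuous.tendsto (by fun_prop) 0
      rw [add_zero, add_zero, mul_one] at this
      exact this.mono_left nhdsWithin_le_nhds
    exact ge_of_tendsto hlim (by filter_upwards [self_mem_nhdsWithin] with η hη using key η hη)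
  · exfalso
    obtain ⟨E, hE⟩ := heig 0
    have hs : HasSum (fun y => Φ 0 y ^ 2) 1 := by
      have := sum_sq (Φ 0); rwa [Φ.orthonormal.1 0, one_pow] at this
    have h0 : Tendsto (fun n => Φ 0 n) cofinite (nhds 0) := by
      have := hs.summable.tendsto_cofinite_zero.sqrt
      rw [Real.sqrt_zero] at this
      simp only [Real.sqrt_sq_eq_abs] at this
      exact (tendsto_zero_iff_abs_tendsto_zero _).mpr this
    have hz := js (by linarith) hE (fun F => sum_le_hasSum F (fun _ _ => sq_nonneg _) hs) h0 hB
    have h2 := hs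
    simp only [hz] at h2
    have h3 : HasSum (fun _ : ℤ => (0:ℝ)) 1 := by simpa using h2
    exact one_ne_zero (h3.unique hasSum_zero)
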